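/- arXiv:0901.3995 — 3 statements merged into one kernel-verified Lean document; each statement's English description precedes it below -/
import Mathlib

section
/- Let n ∈ (0, 1) and β = 1/(4 + n). Then there exists exactly one function F : ℝ → ℝ of class C³ with compact support satisfying |F(y)|^n F'''(y) = β y F(y) for all y ∈ ℝ and ∫_ℝ F(y) dy = 1. Moreover F is even, its support is a bounded symmetric interval [−y₀, y₀], and F changes sign (it is oscillatory near the interface points ±y₀). -/
open MeasureTheory

/-!
Write `φ(s) = |s| ^ (-n) * s`, so that the equation becomes `F''' = β y φ(F)`.

If two profiles have the same `∫ φ`, then `h = β (φ(F) - φ(G))` has a compactly supported second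
primitive; expressing `F - G` through the primitives of `h` turns a virial identity into
`∫ (F - G) h ≤ 0`, and monotonicity of `φ` forces `F = G`. In particular profiles are even, and
since the equation is invariant under a scaling that changes `∫ φ` arbitrarily, nonzero profiles
form a one-parameter family. Scaling also changes the mass, which is nonzero because of a second
monotone functional, built from the running mean of `F`. Hence a profile is determined by its mass.

For existence, solve `F''' = β y φ(F)`, `F 0 = c`, `F' 0 = 0`, `F 1 = 0` on `[0, 1]`. The energy
`F'² / 2 - F F''` decreases, by a fixed factor over steps whose length is a positive power of the
energy. For small `c` these steps sum to less than `1`, so the energy, and with it the solution,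
vanishes before `y = 1`; its even extension by zero is a profile.

The decrease of the energy also shows that a profile vanishing near a point vanishes beyond it, so
that its support is an interval, and a nonnegative profile would be zero since it would satisfy
`F''' ≥ 0`, `F'' ≤ 0`, `F' ≥ 0` and `F ≤ 0` in turn on the positive half-line.
-/

namespace ThinFilm

open Filter Set Topology

/-! ### Signed powers -/

/-- The odd power function `s ↦ |s| ^ (p - 1) * s`. The nonlinearity `|F| ^ (-n) * F` of the profile
equation, solved for the third derivative, is the case `p = 1 - n`. -/
noncomputable def signedPow (p s : ℝ) : ℝ := |s| ^ (p - 1) * s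

section SignedPow

variable {p : ℝ}

@[simp] lemma signedPow_zero (p : ℝ) : signedPow p 0 = 0 := by simp [signedPow]

@[simp] lemma signedPow_neg (p s : ℝ) : signedPow p (-s) = -signedPow p s := by simp [signedPow]

@[simp] lemma signedPow_one_right (p : ℝ) : signedPow p 1 = 1 := by simp [signedPow]

lemma signedPow_one_left (s : ℝ) : signedPow 1 s = s := by simp [signedPow]

lemma signedPow_mul (p a b : ℝ) : signedPow p (a * b) = signedPow p a * signedPow p b := by
  rw [signedPow, abs_mul, Real.mul_rpow (abs_nonneg a) (abs_nonneg b), signedPow, signedPow]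
  ring

lemma signedPow_nonneg (p : ℝ) {s : ℝ} (hs : 0 ≤ s) : 0 ≤ signedPow p s :=
  mul_nonneg (Real.rpow_nonneg (abs_nonneg s) _) hs

lemma signedPow_of_nonneg (hp : p ≠ 0) {s : ℝ} (hs : 0 ≤ s) : signedPow p s = s ^ p := by
  rcases hs.eq_or_lt with rfl | hs
  · rw [signedPow_zero, Real.zero_rpow hp]
  · rw [signedPow, abs_of_pos hs, ← Real.rpow_add_one hs.ne', sub_add_cancel]

lemma abs_signedPow (hp : p ≠ 0) (s : ℝ) : |signedPow p s| = |s| ^ p := by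
  rw [← signedPow_of_nonneg hp (abs_nonneg s), signedPow, signedPow, abs_mul, abs_abs,
    abs_of_nonneg (Real.rpow_nonneg (abs_nonneg s) _)]

lemma mul_signedPow (hp : p + 1 ≠ 0) (s : ℝ) : s * signedPow p s = |s| ^ (p + 1) := by
  rcases eq_or_ne s 0 with rfl | hs
  · simp [Real.zero_rpow hp]
  · have hs' : |s| ≠ 0 := abs_ne_zero.2 hs
    rw [show p + 1 = p - 1 + 1 + 1 by ring, Real.rpow_add_one hs', Real.rpow_add_one hs',
      mul_assoc, abs_mul_abs_self, signedPow]
    ring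

lemma abs_rpow_mul_signedPow_one_sub (n s : ℝ) : |s| ^ n * signedPow (1 - n) s = s := by
  rcases eq_or_ne s 0 with rfl | hs
  · simp
  · rw [signedPow, ← mul_assoc, ← Real.rpow_add (abs_pos.2 hs)]
    simp

lemma signedPow_signedPow (hp : p ≠ 0) (q s : ℝ) :
    signedPow q (signedPow p s) = signedPow (p * q) s := by
  rcases eq_or_ne s 0 with rfl | hs
  · simp
  · have hs' : 0 < |s| := abs_pos.2 hs
    rw [signedPow, abs_signedPow hp, signedPow, signedPow, ← mul_assoc, ← Real.rpow_mul hs'.le,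
      ← Real.rpow_add hs']
    ring_nf

lemma signedPow_inv_signedPow (hp : p ≠ 0) (s : ℝ) : signedPow p (signedPow p⁻¹ s) = s := by
  rw [signedPow_signedPow (inv_ne_zero hp), inv_mul_cancel₀ hp, signedPow_one_left]

lemma signedPow_strictMono (hp : 0 < p) : StrictMono (signedPow p) := by
  refine strictMono_of_odd_strictMonoOn_nonneg (signedPow_neg p) fun a ha b hb hab => ?_
  rw [signedPow_of_nonneg hp.ne' ha, signedPow_of_nonneg hp.ne' hb]
  exact Real.rpow_lt_rpow ha hab hp

lemma sub_mul_signedPow_sub_nonneg (hp : 0 < p) (a b : ℝ) :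
    0 ≤ (a - b) * (signedPow p a - signedPow p b) := by
  rcases le_total a b with h | h
  · exact mul_nonneg_of_nonpos_of_nonpos (sub_nonpos.2 h)
      (sub_nonpos.2 ((signedPow_strictMono hp).monotone h))
  · exact mul_nonneg (sub_nonneg.2 h) (sub_nonneg.2 ((signedPow_strictMono hp).monotone h))

lemma continuous_signedPow (hp : 0 < p) : Continuous (signedPow p) := by
  have heq : signedPow p = fun s => (max s 0) ^ p - (max (-s) 0) ^ p := by
    funext s
    rw [← signedPow_of_nonneg hp.ne' (le_max_right s 0),
      ← signedPow_of_nonneg hp.ne' (le_max_right (-s) 0)]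
    rcases le_total 0 s with hs | hs
    · simp [hs]
    · simp [hs]
  rw [heq]
  exact ((continuous_id.max continuous_const).rpow_const fun _ => Or.inr hp.le).sub
    ((continuous_neg.max continuous_const).rpow_const fun _ => Or.inr hp.le)

lemma abs_signedPow_le (hp : 0 < p) {s X : ℝ} (hs : |s| ≤ X) : |signedPow p s| ≤ X ^ p := by
  rw [abs_signedPow hp.ne']
  exact Real.rpow_le_rpow (abs_nonneg s) hs hp.le

lemma hasDerivAt_abs_rpow_add_one (hp : 0 < p) (s : ℝ) :
    HasDerivAt (fun x : ℝ => |x| ^ (p + 1)) ((p + 1) * signedPow p s) s := by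
  convert hasDerivAt_abs_rpow s (by linarith : 1 < p + 1) using 1
  rw [signedPow, mul_assoc, show p + 1 - 2 = p - 1 by ring]

-- Weighted AM-GM for `1` and `e * t`: the slack in `1 + x ≤ exp x` absorbs the factor `p + 1`.
lemma add_one_mul_rpow_le (hp₀ : 0 < p) (hp₁ : p < 1) {t : ℝ} (ht : 0 ≤ t) :
    (p + 1) * t ^ p ≤ (1 - p) + (p + 1) * t := by
  have amgm : Real.exp p * t ^ p ≤ (1 - p) + p * (Real.exp 1 * t) := by
    have := Real.geom_mean_le_arith_mean2_weighted (w₁ := 1 - p) (w₂ := p) (p₁ := 1)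
      (p₂ := Real.exp 1 * t) (by linarith) hp₀.le zero_le_one (by positivity) (by ring)
    rwa [Real.one_rpow, one_mul, mul_one, Real.mul_rpow (Real.exp_pos 1).le ht,
      Real.exp_one_rpow] at this
  have exp_ge : p + 1 ≤ Real.exp p := Real.add_one_le_exp p
  have mul_exp_one_le : p * Real.exp 1 ≤ Real.exp p := by
    calc p * Real.exp 1 ≤ Real.exp (p - 1) * Real.exp 1 := by
          gcongr; linarith [Real.add_one_le_exp (p - 1)]
      _ = Real.exp p := by rw [← Real.exp_add, sub_add_cancel]
  refine le_of_mul_le_mul_left ?_ (Real.exp_pos p)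
  calc Real.exp p * ((p + 1) * t ^ p) = (p + 1) * (Real.exp p * t ^ p) := by ring
    _ ≤ (p + 1) * ((1 - p) + p * (Real.exp 1 * t)) := by gcongr
    _ = (p + 1) * (1 - p) + (p + 1) * (p * Real.exp 1 * t) := by ring
    _ ≤ Real.exp p * (1 - p) + (p + 1) * (Real.exp p * t) := by gcongr
    _ = Real.exp p * ((1 - p) + (p + 1) * t) := by ring

lemma le_rpow_add_rpow_add_one (hp₀ : 0 < p) (hp₁ : p < 1) {t : ℝ} (ht : 0 ≤ t) :
    t ≤ t ^ p + t ^ (p + 1) := by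
  have h₀ : 0 ≤ t ^ p := Real.rpow_nonneg ht _
  have h₁ : 0 ≤ t ^ (p + 1) := Real.rpow_nonneg ht _
  rcases le_total t 1 with hle | hge
  · linarith [Real.self_le_rpow_of_le_one ht hle hp₁.le]
  · linarith [Real.self_le_rpow_of_one_le hge (by linarith : 1 ≤ p + 1)]

lemma signedPow_sub_self_le (hp₀ : 0 < p) (hp₁ : p < 1) (u : ℝ) :
    (p + 1) * (signedPow p u - u) ≤ (p + 1) * |u| ^ (p + 1) + (1 - p) := by
  rcases le_total 0 u with hu | hu
  · have : 0 ≤ (p + 1) * |u| ^ (p + 1) := by positivity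
    rw [signedPow_of_nonneg hp₀.ne' hu]
    linarith [add_one_mul_rpow_le hp₀ hp₁ hu]
  · have hle := le_rpow_add_rpow_add_one hp₀ hp₁ (neg_nonneg.2 hu)
    have hu' : signedPow p u = -(-u) ^ p := by
      rw [← signedPow_of_nonneg hp₀.ne' (neg_nonneg.2 hu), signedPow_neg, neg_neg]
    rw [hu', abs_of_nonpos hu]
    nlinarith

lemma signedPow_mul_sub_le (hp₀ : 0 < p) (hp₁ : p < 1) (a v : ℝ) :
    (p + 1) * (signedPow p v * a - signedPow p a * v) ≤
      (p + 1) * |v| ^ (p + 1) + (1 - p) * |a| ^ (p + 1) := by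
  rcases eq_or_ne a 0 with rfl | ha
  · have : 0 ≤ |v| ^ (p + 1) := by positivity
    have : (0 : ℝ) ^ (p + 1) = 0 := Real.zero_rpow (by linarith)
    simp only [mul_zero, signedPow_zero, zero_mul, sub_zero, abs_zero, this, add_zero]
    positivity
  · obtain ⟨u, rfl⟩ : ∃ u, v = a * u := ⟨v / a, by field_simp⟩
    have hA : a * signedPow p a = |a| ^ (p + 1) := mul_signedPow (by linarith) a
    calc (p + 1) * (signedPow p (a * u) * a - signedPow p a * (a * u))
        = |a| ^ (p + 1) * ((p + 1) * (signedPow p u - u)) := by rw [signedPow_mul, ← hA]; ring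
      _ ≤ |a| ^ (p + 1) * ((p + 1) * |u| ^ (p + 1) + (1 - p)) := by
          gcongr; exact signedPow_sub_self_le hp₀ hp₁ u
      _ = (p + 1) * |a * u| ^ (p + 1) + (1 - p) * |a| ^ (p + 1) := by
          rw [abs_mul, Real.mul_rpow (abs_nonneg a) (abs_nonneg u)]; ring

end SignedPow

/-! ### Profiles -/

lemma deriv_eq_zero_of_le_endpoints {f f' : ℝ → ℝ} {a b : ℝ} (hf : ContinuousOn f (Icc a b))
    (hderiv : ∀ y ∈ Ioo a b, HasDerivAt f (f' y) y) (hf' : ∀ y ∈ Ioo a b, 0 ≤ f' y)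
    (hend : f b ≤ f a) : ∀ y ∈ Ioo a b, f' y = 0 := by
  intro y hy
  have hmono : MonotoneOn f (Icc a b) := by
    refine monotoneOn_of_hasDerivWithinAt_nonneg (convex_Icc a b) hf (f' := f') ?_ ?_ <;>
      rw [interior_Icc]
    exacts [fun y hy => (hderiv y hy).hasDerivWithinAt, hf']
  have hab : a ≤ b := (hy.1.trans hy.2).le
  have hconst : f =ᶠ[𝓝 y] fun _ => f a := by
    filter_upwards [Icc_mem_nhds hy.1 hy.2] with z hz
    exact le_antisymm ((hmono hz (right_mem_Icc.2 hab) hz.2).trans hend)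
      (hmono (left_mem_Icc.2 hab) hz hz.1)
  exact ((hderiv y hy).congr_of_eventuallyEq hconst.symm).unique (hasDerivAt_const y _)

/-- The primitive of `f` vanishing at `a`. -/
noncomputable def primitive (a : ℝ) (f : ℝ → ℝ) (y : ℝ) : ℝ := ∫ t in a..y, f t

section Primitive

variable {f : ℝ → ℝ}

@[simp] lemma primitive_self (a : ℝ) (f : ℝ → ℝ) : primitive a f a = 0 :=
  intervalIntegral.integral_same

lemma hasDerivAt_primitive (hf : Continuous f) (a y : ℝ) :
    HasDerivAt (primitive a f) (f y) y :=
  (hf.integral_hasStrictDerivAt a y).hasDerivAt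

lemma deriv_primitive (hf : Continuous f) (a : ℝ) : deriv (primitive a f) = f :=
  funext fun y => (hasDerivAt_primitive hf a y).deriv

lemma contDiff_primitive {m : ℕ} (hf : ContDiff ℝ m f) (a : ℝ) :
    ContDiff ℝ (m + 1) (primitive a f) := by
  refine contDiff_succ_iff_deriv.2
    ⟨fun y => (hasDerivAt_primitive hf.continuous a y).differentiableAt, by simp, ?_⟩
  rwa [deriv_primitive hf.continuous]

lemma continuous_primitive (hf : Continuous f) (a : ℝ) : Continuous (primitive a f) :=
  continuous_iff_continuousAt.2 fun y => (hasDerivAt_primitive hf a y).continuousAt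

lemma primitive_neg_of_even (hf : ∀ t, f (-t) = f t) (y : ℝ) :
    primitive 0 f (-y) = -primitive 0 f y := by
  have h := intervalIntegral.integral_comp_neg (a := -y) (b := 0) f
  simp only [hf, neg_neg, neg_zero] at h
  rw [primitive, intervalIntegral.integral_symm, h, primitive]

lemma primitive_neg_of_odd (hf : ∀ t, f (-t) = -f t) (y : ℝ) :
    primitive 0 f (-y) = primitive 0 f y := by
  have h := intervalIntegral.integral_comp_neg (a := -y) (b := 0) f
  simp only [hf, neg_neg, neg_zero, intervalIntegral.integral_neg] at h
  rw [primitive, intervalIntegral.integral_symm, h, primitive]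

end Primitive

/-- `F` is `C³` and solves `F''' = β y φ(F)`, `φ = signedPow p`, at the points of `s`.
Regularity is required on the whole line, so that no one-sided derivatives occur. -/
structure IsSolutionOn (p β : ℝ) (F : ℝ → ℝ) (s : Set ℝ) : Prop where
  contDiff : ContDiff ℝ 3 F
  ode : ∀ y ∈ s, deriv (deriv (deriv F)) y = β * y * signedPow p (F y)

/-- A similarity profile: a compactly supported solution on the whole line of the profile equation,
solved for the third derivative. -/
structure IsProfile (p β : ℝ) (F : ℝ → ℝ) : Prop extends IsSolutionOn p β F univ where
  hasCompactSupport : HasCompactSupport F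

section ContDiffThree

variable {F : ℝ → ℝ}

lemma hasDerivAt_of_contDiff_three (hF : ContDiff ℝ 3 F) (y : ℝ) : HasDerivAt F (deriv F y) y :=
  (hF.differentiable (by norm_num) y).hasDerivAt

lemma hasDerivAt_deriv_of_contDiff_three (hF : ContDiff ℝ 3 F) (y : ℝ) :
    HasDerivAt (deriv F) (deriv (deriv F) y) y :=
  ((ContDiff.deriv' (n := 2) hF).differentiable (by norm_num) y).hasDerivAt

lemma contDiff_one_deriv_deriv (hF : ContDiff ℝ 3 F) : ContDiff ℝ 1 (deriv (deriv F)) :=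
  ContDiff.deriv' (n := 1) (ContDiff.deriv' (n := 2) hF)

lemma hasDerivAt_deriv_deriv_of_contDiff_three (hF : ContDiff ℝ 3 F) (y : ℝ) :
    HasDerivAt (deriv (deriv F)) (deriv (deriv (deriv F)) y) y :=
  ((contDiff_one_deriv_deriv hF).differentiable one_ne_zero y).hasDerivAt

end ContDiffThree

lemma ode_iff_of_contDiff {n β : ℝ} (hn : n < 1) {F : ℝ → ℝ} (hF : ContDiff ℝ 3 F) :
    (∀ y, |F y| ^ n * deriv (deriv (deriv F)) y = β * y * F y) ↔
      ∀ y, deriv (deriv (deriv F)) y = β * y * signedPow (1 - n) (F y) := by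
  refine ⟨fun h => ?_, fun h y => ?_⟩
  · -- The set where the solved equation fails is open, and `F` vanishes on it.
    set s := {y | deriv (deriv (deriv F)) y ≠ β * y * signedPow (1 - n) (F y)}
    have hopen : IsOpen s := isOpen_ne_fun (contDiff_one_deriv_deriv hF).continuous_deriv_one
      ((continuous_const.mul continuous_id).mul
        ((continuous_signedPow (sub_pos.2 hn)).comp hF.continuous))
    have hzero : ∀ y ∈ s, F y = 0 := by
      intro y hy
      by_contra hF₀
      refine hy (mul_left_cancel₀ (Real.rpow_pos_of_pos (abs_pos.2 hF₀) n).ne' ?_)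
      rw [h y, mul_left_comm, abs_rpow_mul_signedPow_one_sub]
    intro y
    by_contra hy
    have hF₀ : F =ᶠ[𝓝 y] fun _ => 0 := by
      filter_upwards [hopen.mem_nhds hy] with z hz using hzero z hz
    refine hy ?_
    rw [hF₀.deriv.deriv.deriv.eq_of_nhds, hF₀.eq_of_nhds]
    simp
  · rw [h y, mul_left_comm, abs_rpow_mul_signedPow_one_sub]

lemma isProfile_one_sub_iff {n β : ℝ} (hn : n < 1) {F : ℝ → ℝ} :
    IsProfile (1 - n) β F ↔ ContDiff ℝ 3 F ∧ HasCompactSupport F ∧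
      ∀ y, |F y| ^ n * deriv (deriv (deriv F)) y = β * y * F y := by
  refine ⟨fun h => ⟨h.contDiff, h.hasCompactSupport, (ode_iff_of_contDiff hn h.contDiff).2
    fun y => h.ode y (mem_univ y)⟩, fun ⟨hF, hsupp, hode⟩ => ⟨⟨hF, fun y _ =>
      (ode_iff_of_contDiff hn hF).1 hode y⟩, hsupp⟩⟩

/-! ### The energy -/

/-- The quantity `F'² / 2 - F F''`, which decreases along solutions on the positive half-line. -/
noncomputable def energy (F : ℝ → ℝ) (y : ℝ) : ℝ := (deriv F y) ^ 2 / 2 - F y * deriv (deriv F) y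

lemma continuous_energy {F : ℝ → ℝ} (hF : ContDiff ℝ 3 F) : Continuous (energy F) := by
  have h₁ : Continuous (deriv F) := hF.continuous_deriv (by norm_num)
  have h₂ : Continuous (deriv (deriv F)) := (contDiff_one_deriv_deriv hF).continuous
  exact ((h₁.pow 2).div_const 2).sub (hF.continuous.mul h₂)

lemma energy_eq_zero {F : ℝ → ℝ} {y : ℝ} (hF : F =ᶠ[𝓝 y] fun _ => 0) : energy F y = 0 := by
  simp [energy, hF.eq_of_nhds, hF.deriv.eq_of_nhds]

namespace IsSolutionOn

variable {p β a b : ℝ} {F : ℝ → ℝ} {s : Set ℝ}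

lemma mono (h : IsSolutionOn p β F s) {t : Set ℝ} (hts : t ⊆ s) : IsSolutionOn p β F t :=
  ⟨h.contDiff, fun y hy => h.ode y (hts hy)⟩

lemma hasDerivAt_deriv_deriv (h : IsSolutionOn p β F s) {y : ℝ} (hy : y ∈ s) :
    HasDerivAt (deriv (deriv F)) (β * y * signedPow p (F y)) y :=
  h.ode y hy ▸ hasDerivAt_deriv_deriv_of_contDiff_three h.contDiff y

lemma hasDerivAt_energy (hp : 0 < p) (h : IsSolutionOn p β F s) {y : ℝ} (hy : y ∈ s) :
    HasDerivAt (energy F) (-(β * y * |F y| ^ (p + 1))) y := by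
  have h₀ := hasDerivAt_of_contDiff_three h.contDiff y
  have h₁ := hasDerivAt_deriv_of_contDiff_three h.contDiff y
  refine (((h₁.pow 2).div_const 2).sub (h₀.mul (h.hasDerivAt_deriv_deriv hy))).congr_deriv ?_
  rw [← mul_signedPow (by linarith)]
  ring

lemma antitoneOn_energy (hp : 0 < p) (hβ : 0 ≤ β) (ha : 0 ≤ a)
    (h : IsSolutionOn p β F (Icc a b)) : AntitoneOn (energy F) (Icc a b) := by
  refine antitoneOn_of_hasDerivWithinAt_nonpos (convex_Icc a b)
    (continuous_energy h.contDiff).continuousOn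
    (fun y hy => (h.hasDerivAt_energy hp (interior_subset hy)).hasDerivWithinAt) fun y hy => ?_
  have : 0 ≤ y := ha.trans (interior_subset hy).1
  have : 0 ≤ β * y * |F y| ^ (p + 1) := by positivity
  linarith

lemma eq_zero_of_energy_le (hp : 0 < p) (hβ : 0 < β) (ha : 0 ≤ a)
    (h : IsSolutionOn p β F (Icc a b)) (hE : energy F a ≤ energy F b) :
    ∀ y ∈ Ioo a b, F y = 0 := by
  intro y hy
  have hpos : ∀ z ∈ Ioo a b, 0 < β * z := fun z hz => mul_pos hβ (ha.trans_lt hz.1)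
  have hderiv := deriv_eq_zero_of_le_endpoints (f := fun z => -energy F z)
    (f' := fun z => β * z * |F z| ^ (p + 1)) (continuous_energy h.contDiff).neg.continuousOn
    (fun z hz => (h.hasDerivAt_energy hp (Ioo_subset_Icc_self hz)).neg.congr_deriv (neg_neg _))
    (fun z hz => mul_nonneg (hpos z hz).le (by positivity)) (neg_le_neg hE) y hy
  have := (mul_eq_zero.1 hderiv).resolve_left (hpos y hy).ne'
  exact abs_eq_zero.1 ((Real.rpow_eq_zero (abs_nonneg _) (by linarith)).1 this)

end IsSolutionOn

lemma isProfile_zero (p β : ℝ) : IsProfile p β fun _ => 0 :=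
  ⟨⟨contDiff_const, fun y _ => by simp⟩, HasCompactSupport.zero⟩

lemma deriv_const_mul_comp_mul_left (a k : ℝ) (f : ℝ → ℝ) :
    deriv (fun y => a * f (k * y)) = fun y => a * k * deriv f (k * y) := by
  funext y
  rw [deriv_const_mul_field, deriv_comp_mul_left, smul_eq_mul, mul_assoc]

lemma IsProfile.const_mul_comp_mul_left {p β a k : ℝ} {F : ℝ → ℝ} (h : IsProfile p β F)
    (hk : k ≠ 0) (hak : a * k ^ 4 = signedPow p a) : IsProfile p β fun y => a * F (k * y) := by
  refine ⟨⟨contDiff_const.mul (h.contDiff.comp (contDiff_const.mul contDiff_id)), fun y _ => ?_⟩,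
    (h.hasCompactSupport.comp_smul hk).mul_left⟩
  simp only [deriv_const_mul_comp_mul_left, h.ode _ (mem_univ _), signedPow_mul, ← hak]
  ring

lemma IsProfile.exists_forall_le_abs {p β : ℝ} {F : ℝ → ℝ} (h : IsProfile p β F) :
    ∃ R, ∀ y, R ≤ |y| → F =ᶠ[𝓝 y] fun _ => 0 := by
  obtain ⟨R, -, hzero⟩ := h.hasCompactSupport.exists_pos_le_norm
  refine ⟨R + 1, fun y hy => ?_⟩
  filter_upwards [(isOpen_lt continuous_const continuous_abs).mem_nhds (by linarith : R < |y|)]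
    with z hz using hzero z (le_of_lt hz)

/-! ### Uniqueness for a given integral of `φ(F)` -/

lemma eq_of_hasDerivAt_eq {u v u' : ℝ → ℝ} (hu : ∀ y, HasDerivAt u (u' y) y)
    (hv : ∀ y, HasDerivAt v (u' y) y) {a : ℝ} (ha : u a = v a) : u = v := by
  have hw : ∀ y, HasDerivAt (u - v) 0 y := fun y => by simpa using (hu y).sub (hv y)
  funext y
  have := is_const_of_deriv_eq_zero (fun y => (hw y).differentiableAt) (fun y => (hw y).deriv) y a
  simp only [Pi.sub_apply, ha, sub_self] at this
  linarith

section IteratedPrimitive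

variable {a : ℝ} {u h : ℝ → ℝ}

lemma hasDerivAt_mul_primitive_sub (hh : Continuous h) (a k y : ℝ) :
    HasDerivAt (fun y => y * primitive a h y - (k + 1) * primitive a (primitive a h) y)
      (y * h y - k * primitive a h y) y := by
  refine (((hasDerivAt_id y).mul (hasDerivAt_primitive hh a y)).sub
    ((hasDerivAt_primitive (continuous_primitive hh a) a y).const_mul (k + 1))).congr_deriv ?_
  simp only [id]
  ring

variable (hu : ContDiff ℝ 3 u) (hh : Continuous h)
  (hode : ∀ y, deriv (deriv (deriv u)) y = y * h y) (ha : u =ᶠ[𝓝 a] fun _ => 0)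

include hu hh hode ha

lemma deriv_deriv_eq_primitive (y : ℝ) : deriv (deriv u) y =
    y * primitive a h y - primitive a (primitive a h) y := by
  refine congrFun (eq_of_hasDerivAt_eq (a := a)
    (fun y => hode y ▸ hasDerivAt_deriv_deriv_of_contDiff_three hu y)
    (fun y => by simpa using hasDerivAt_mul_primitive_sub hh a 0 y) ?_) y
  simp [ha.deriv.deriv.eq_of_nhds]

lemma eq_primitive (y : ℝ) : u y =
    y * primitive a (primitive a (primitive a h)) y -
      3 * primitive a (primitive a (primitive a (primitive a h))) y := by
  have hP := continuous_primitive hh a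
  have h₁ : deriv u = fun y => y * primitive a (primitive a h) y -
      2 * primitive a (primitive a (primitive a h)) y := by
    refine eq_of_hasDerivAt_eq (a := a) (hasDerivAt_deriv_of_contDiff_three hu) (fun y => ?_)
      (by simp [ha.deriv.eq_of_nhds])
    convert hasDerivAt_mul_primitive_sub hP a 1 y using 1
    · norm_num
    · rw [deriv_deriv_eq_primitive hu hh hode ha, one_mul]
  have h₀ : u = fun y => y * primitive a (primitive a (primitive a h)) y -
      3 * primitive a (primitive a (primitive a (primitive a h))) y := by
    refine eq_of_hasDerivAt_eq (a := a) (hasDerivAt_of_contDiff_three hu) (fun y => ?_)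
      (by simp [ha.eq_of_nhds])
    convert hasDerivAt_mul_primitive_sub (continuous_primitive hP a) a 2 y using 1
    · norm_num
    · rw [h₁]
  exact congrFun h₀ y

end IteratedPrimitive

-- A virial identity: with `ψ` the fourth primitive of `h`,
-- `(y ψ' ψ''' - 3 ψ ψ''' + 2 ψ' ψ'' - y ψ''² / 2)' = (y ψ' - 3 ψ) h + (3 / 2) ψ''²`.
lemma mul_eq_zero_of_virial {a b : ℝ} {h : ℝ → ℝ} (hh : Continuous h)
    (h₁ : primitive a h b = 0) (h₂ : primitive a (primitive a h) b = 0)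
    (hnonneg : ∀ y ∈ Ioo a b, 0 ≤ (y * primitive a (primitive a (primitive a h)) y -
      3 * primitive a (primitive a (primitive a (primitive a h))) y) * h y) :
    ∀ y ∈ Ioo a b, (y * primitive a (primitive a (primitive a h)) y -
      3 * primitive a (primitive a (primitive a (primitive a h))) y) * h y = 0 := by
  set P₁ := primitive a h
  set P₂ := primitive a P₁
  set P₃ := primitive a P₂
  set P₄ := primitive a P₃
  have c₁ : Continuous P₁ := continuous_primitive hh a
  have c₂ : Continuous P₂ := continuous_primitive c₁ a
  have c₃ : Continuous P₃ := continuous_primitive c₂ a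
  set virial : ℝ → ℝ := fun y => y * P₃ y * P₁ y - 3 * (P₄ y * P₁ y) + 2 * (P₃ y * P₂ y) -
    y * P₂ y * P₂ y / 2 with hvirial
  have hderiv : ∀ y, HasDerivAt virial
      ((y * P₃ y - 3 * P₄ y) * h y + 3 / 2 * P₂ y ^ 2) y := by
    intro y
    have d₁ : HasDerivAt P₁ (h y) y := hasDerivAt_primitive hh a y
    have d₂ : HasDerivAt P₂ (P₁ y) y := hasDerivAt_primitive c₁ a y
    have d₃ : HasDerivAt P₃ (P₂ y) y := hasDerivAt_primitive c₂ a y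
    have d₄ : HasDerivAt P₄ (P₃ y) y := hasDerivAt_primitive c₃ a y
    have d₀ := hasDerivAt_id y
    refine (((((d₀.mul d₃).mul d₁).sub ((d₄.mul d₁).const_mul 3)).add
      ((d₃.mul d₂).const_mul 2)).sub (((d₀.mul d₂).mul d₂).div_const 2)).congr_deriv ?_
    simp only [id, Pi.mul_apply]
    ring
  intro y hy
  have hzero := deriv_eq_zero_of_le_endpoints (f := virial)
    (fun y _ => (hderiv y).continuousAt.continuousWithinAt) (fun y _ => hderiv y)
    (fun y hy => add_nonneg (hnonneg y hy) (by positivity))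
    (by simp [hvirial, h₁, h₂, P₁, P₂, P₃]) y hy
  have : 0 ≤ 3 / 2 * P₂ y ^ 2 := by positivity
  linarith [hnonneg y hy]

lemma integral_eq_primitive {f : ℝ → ℝ} {R : ℝ} (hf : ∀ y, R ≤ |y| → f y = 0) :
    ∫ y, f y = primitive (-R) f R := by
  refine (intervalIntegral.integral_eq_integral_of_support_subset fun y hy => ?_).symm
  have := abs_lt.1 (not_le.1 fun h => hy (hf y h))
  exact ⟨this.1, this.2.le⟩

lemma IsProfile.integrable_signedPow {p β : ℝ} (hp : 0 < p) {F : ℝ → ℝ} (hF : IsProfile p β F) :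
    Integrable fun y => signedPow p (F y) :=
  ((continuous_signedPow hp).comp hF.contDiff.continuous).integrable_of_hasCompactSupport
    (hF.hasCompactSupport.comp_left (signedPow_zero p))

lemma IsProfile.exists_common_support {p β : ℝ} {F G : ℝ → ℝ} (hF : IsProfile p β F)
    (hG : IsProfile p β G) :
    ∃ R, ∀ y, R ≤ |y| → F =ᶠ[𝓝 y] (fun _ => 0) ∧ G =ᶠ[𝓝 y] fun _ => 0 := by
  obtain ⟨R₁, hF₀⟩ := hF.exists_forall_le_abs
  obtain ⟨R₂, hG₀⟩ := hG.exists_forall_le_abs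
  exact ⟨max R₁ R₂, fun y hy =>
    ⟨hF₀ y ((le_max_left _ _).trans hy), hG₀ y ((le_max_right _ _).trans hy)⟩⟩

lemma IsProfile.deriv_deriv_deriv_sub {p β : ℝ} {F G : ℝ → ℝ} (hF : IsProfile p β F)
    (hG : IsProfile p β G) (y : ℝ) : deriv (deriv (deriv (F - G))) y =
      y * (β * (signedPow p (F y) - signedPow p (G y))) := by
  have h₁ : deriv (F - G) = deriv F - deriv G := funext fun y =>
    ((hasDerivAt_of_contDiff_three hF.contDiff y).sub
      (hasDerivAt_of_contDiff_three hG.contDiff y)).deriv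
  have h₂ : deriv (deriv F - deriv G) = deriv (deriv F) - deriv (deriv G) := funext fun y =>
    ((hasDerivAt_deriv_of_contDiff_three hF.contDiff y).sub
      (hasDerivAt_deriv_of_contDiff_three hG.contDiff y)).deriv
  rw [h₁, h₂, ((hF.hasDerivAt_deriv_deriv (mem_univ y)).sub
    (hG.hasDerivAt_deriv_deriv (mem_univ y))).deriv]
  ring

theorem IsProfile.eq_of_integral_signedPow_eq {p β : ℝ} (hp : 0 < p) (hβ : 0 < β) {F G : ℝ → ℝ}
    (hF : IsProfile p β F) (hG : IsProfile p β G)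
    (hint : ∫ y, signedPow p (F y) = ∫ y, signedPow p (G y)) : F = G := by
  obtain ⟨R, hzero⟩ := hF.exists_common_support hG
  set h : ℝ → ℝ := fun y => β * (signedPow p (F y) - signedPow p (G y)) with hh
  have hcont : Continuous h := continuous_const.mul
    (((continuous_signedPow hp).comp hF.contDiff.continuous).sub
      ((continuous_signedPow hp).comp hG.contDiff.continuous))
  have hu : ContDiff ℝ 3 (F - G) := hF.contDiff.sub hG.contDiff
  have hode := hF.deriv_deriv_deriv_sub hG
  have hu₀ : ∀ y, R ≤ |y| → F - G =ᶠ[𝓝 y] fun _ => 0 := fun y hy => by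
    filter_upwards [(hzero y hy).1, (hzero y hy).2] with z hFz hGz
    rw [Pi.sub_apply, hFz, hGz, sub_zero]
  have hneg : F - G =ᶠ[𝓝 (-R)] fun _ => 0 := hu₀ _ (by rw [abs_neg]; exact le_abs_self R)
  have h₁ : primitive (-R) h R = 0 := by
    rw [← integral_eq_primitive fun y hy => by
        simp [hh, (hzero y hy).1.eq_of_nhds, (hzero y hy).2.eq_of_nhds],
      integral_const_mul, integral_sub (hF.integrable_signedPow hp) (hG.integrable_signedPow hp),
      hint, sub_self, mul_zero]
  have h₂ : primitive (-R) (primitive (-R) h) R = 0 := by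
    have := deriv_deriv_eq_primitive hu hcont hode hneg R
    rw [(hu₀ R (le_abs_self R)).deriv.deriv.eq_of_nhds, h₁] at this
    simpa using this
  have hu_mul : ∀ y, (F - G) y * h y =
      β * ((F y - G y) * (signedPow p (F y) - signedPow p (G y))) := fun y => by
    simp only [hh, Pi.sub_apply]; ring
  have hvirial := mul_eq_zero_of_virial hcont h₁ h₂ fun y _ => by
    rw [← eq_primitive hu hcont hode hneg, hu_mul]
    exact mul_nonneg hβ.le (sub_mul_signedPow_sub_nonneg hp _ _)
  funext y
  rcases le_or_gt R |y| with hy | hy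
  · rw [(hzero y hy).1.eq_of_nhds, (hzero y hy).2.eq_of_nhds]
  · have := hvirial y (abs_lt.1 hy)
    rw [← eq_primitive hu hcont hode hneg, hu_mul, mul_eq_zero, mul_eq_zero] at this
    rcases this.resolve_left hβ.ne' with h | h
    exacts [sub_eq_zero.1 h, (signedPow_strictMono hp).injective (sub_eq_zero.1 h)]

lemma IsProfile.apply_neg {p β : ℝ} (hp : 0 < p) (hβ : 0 < β) {F : ℝ → ℝ} (hF : IsProfile p β F)
    (y : ℝ) : F (-y) = F y := by
  have hneg : IsProfile p β fun y => F (-y) := by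
    simpa using hF.const_mul_comp_mul_left (a := 1) (k := -1) (by norm_num) (by norm_num)
  exact congrFun (hneg.eq_of_integral_signedPow_eq hp hβ hF
    (integral_neg_eq_self (fun y => signedPow p (F y)) volume)) y

/-! ### Profiles of zero mass -/

lemma eq_left_of_hasDerivAt_zero {f : ℝ → ℝ} {a b : ℝ} (hf : ContinuousOn f (Icc a b))
    (hderiv : ∀ y ∈ Ioo a b, HasDerivAt f 0 y) : ∀ y ∈ Icc a b, f y = f a := by
  intro y hy
  rcases hy.1.eq_or_lt with rfl | hay
  · rfl
  · obtain ⟨c, -, hc⟩ := exists_hasDerivAt_eq_slope f (fun _ => 0) hay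
      (hf.mono (Icc_subset_Icc_right hy.2)) fun z hz => hderiv z ⟨hz.1, hz.2.trans_le hy.2⟩
    have := (div_eq_zero_iff.1 hc.symm).resolve_right (sub_pos.2 hay).ne'
    linarith

/-- The derivative of the running mean `A y = y⁻¹ ∫₀^y F`, written without differentiation. Its
junk value `0` at `0` is the right limit there when `F' 0 = 0`, and `A y = F y - y * meanSlope F y`
holds at every `y ≠ 0`. -/
noncomputable def meanSlope (F : ℝ → ℝ) (y : ℝ) : ℝ := (y * F y - primitive 0 F y) / y ^ 2

/-- A quantity increasing along solutions on the positive half-line, built from the derivative of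
the running mean of `F`. It vanishes at `0`, and also where `F`, `F'` and `∫₀ F` vanish. -/
noncomputable def meanFunctional (p β : ℝ) (F : ℝ → ℝ) (y : ℝ) : ℝ :=
  meanSlope F y * (y * deriv (deriv F) y + deriv F y) - meanSlope F y ^ 2 - deriv F y ^ 2 / 2 +
    β / (p + 1) * (y ^ 2 * |F y - y * meanSlope F y| ^ (p + 1))

section MeanSlope

variable {p β L : ℝ} {F : ℝ → ℝ}

lemma hasDerivAt_meanSlope (hF : ContDiff ℝ 3 F) {y : ℝ} (hy : y ≠ 0) :
    HasDerivAt (meanSlope F) ((deriv F y - 2 * meanSlope F y) / y) y := by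
  refine ((((hasDerivAt_id y).mul (hasDerivAt_of_contDiff_three hF y)).sub
    (hasDerivAt_primitive hF.continuous 0 y)).div (hasDerivAt_pow 2 y)
    (pow_ne_zero 2 hy)).congr_deriv ?_
  simp only [meanSlope, id, Pi.mul_apply, Pi.sub_apply]
  field_simp
  ring

lemma meanSlope_zero (F : ℝ → ℝ) : meanSlope F 0 = 0 := by simp [meanSlope]

lemma continuousOn_meanSlope (hF : ContDiff ℝ 3 F) (h₀ : deriv F 0 = 0) :
    ContinuousOn (meanSlope F) (Ici 0) := by
  intro y hy
  rcases (mem_Ici.1 hy).eq_or_lt with rfl | hy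
  · have hF' : Continuous (deriv F) := hF.continuous_deriv (by norm_num)
    have hpos : ∀ᶠ y : ℝ in 𝓝[>] 0, 0 < y := self_mem_nhdsWithin
    have hnum : Continuous fun y => y * F y - primitive 0 F y :=
      (continuous_id.mul hF.continuous).sub (continuous_primitive hF.continuous 0)
    refine continuousWithinAt_Ioi_iff_Ici.1 ?_
    rw [ContinuousWithinAt, meanSlope_zero]
    refine HasDerivAt.lhopital_zero_nhdsGT (f' := fun y => y * deriv F y) (g' := fun y => 2 * y)
      (Eventually.of_forall fun y => ?_) (Eventually.of_forall fun y => by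
        simpa using hasDerivAt_pow 2 y) (hpos.mono fun y hy => by positivity) ?_ ?_ ?_
    · refine (((hasDerivAt_id y).mul (hasDerivAt_of_contDiff_three hF y)).sub
        (hasDerivAt_primitive hF.continuous 0 y)).congr_deriv ?_
      simp only [id]
      ring
    · exact (hnum.tendsto' 0 0 (by simp)).mono_left nhdsWithin_le_nhds
    · exact ((continuous_pow 2).tendsto' 0 0 (by simp)).mono_left nhdsWithin_le_nhds
    · refine Tendsto.congr' (f₁ := fun y => deriv F y / 2) (hpos.mono fun y hy => by
        field_simp) ?_
      exact ((hF'.div_const 2).tendsto' 0 0 (by simp [h₀])).mono_left nhdsWithin_le_nhds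
  · exact (hasDerivAt_meanSlope hF hy.ne').continuousAt.continuousWithinAt

lemma continuousOn_meanFunctional (hp : 0 < p) (hF : ContDiff ℝ 3 F) (h₀ : deriv F 0 = 0) :
    ContinuousOn (meanFunctional p β F) (Ici 0) := by
  have hq := continuousOn_meanSlope hF h₀
  have h₁ : Continuous (deriv F) := hF.continuous_deriv (by norm_num)
  have h₂ : Continuous (deriv (deriv F)) := (contDiff_one_deriv_deriv hF).continuous
  have hA : ContinuousOn (fun y => F y - y * meanSlope F y) (Ici 0) :=
    hF.continuous.continuousOn.sub (continuousOn_id.mul hq)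
  refine (((hq.mul ((continuous_id.mul h₂).add h₁).continuousOn).sub (hq.pow 2)).sub
    ((h₁.pow 2).div_const 2).continuousOn).add (continuousOn_const.mul
      ((continuous_pow 2).continuousOn.mul ?_))
  exact hA.abs.rpow_const fun _ _ => Or.inr (by linarith)

lemma IsSolutionOn.hasDerivAt_meanFunctional (hp : 0 < p) {s : Set ℝ} (h : IsSolutionOn p β F s)
    {y : ℝ} (hy : y ∈ s) (hy₀ : y ≠ 0) :
    HasDerivAt (meanFunctional p β F)
      (y * (((deriv F y - 2 * meanSlope F y) / y) ^ 2 + β / (p + 1) *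
        ((p + 1) * |F y| ^ (p + 1) + (1 - p) * |F y - y * meanSlope F y| ^ (p + 1) -
          (p + 1) * (signedPow p (F y) * (F y - y * meanSlope F y) -
            signedPow p (F y - y * meanSlope F y) * F y)))) y := by
  have hp' : p + 1 ≠ 0 := by linarith
  have d₀ := hasDerivAt_of_contDiff_three h.contDiff y
  have d₁ := hasDerivAt_deriv_of_contDiff_three h.contDiff y
  have d₂ := h.hasDerivAt_deriv_deriv hy
  have dq := hasDerivAt_meanSlope h.contDiff hy₀
  have dA := (hasDerivAt_abs_rpow_add_one hp _).comp y (d₀.sub ((hasDerivAt_id y).mul dq))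
  refine ((((dq.mul (((hasDerivAt_id y).mul d₂).add d₁)).sub (dq.pow 2)).sub
    ((d₁.pow 2).div_const 2)).add
      (((hasDerivAt_pow 2 y).mul dA).const_mul (β / (p + 1)))).congr_deriv ?_
  simp only [id, Pi.mul_apply, Pi.add_apply, Pi.sub_apply, Function.comp_apply]
  rw [← mul_signedPow hp' (F y), ← mul_signedPow hp' (F y - y * meanSlope F y)]
  field_simp
  ring

lemma IsSolutionOn.eq_zero_of_integral_eq_zero (hp₀ : 0 < p) (hp₁ : p < 1) (hβ : 0 < β)
    (h : IsSolutionOn p β F (Ioo 0 L)) (h₀ : deriv F 0 = 0) (hL₀ : F L = 0) (hL₁ : deriv F L = 0)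
    (hint : primitive 0 F L = 0) : ∀ y ∈ Icc 0 L, F y = 0 := by
  have hq : ContinuousOn (meanSlope F) (Icc 0 L) :=
    (continuousOn_meanSlope h.contDiff h₀).mono Icc_subset_Ici_self
  have hends : meanFunctional p β F L ≤ meanFunctional p β F 0 := by
    simp [meanFunctional, meanSlope, hL₀, hL₁, h₀, hint, Real.zero_rpow (by linarith : p + 1 ≠ 0)]
  have hgap : ∀ y, 0 ≤ β / (p + 1) *
      ((p + 1) * |F y| ^ (p + 1) + (1 - p) * |F y - y * meanSlope F y| ^ (p + 1) -
        (p + 1) * (signedPow p (F y) * (F y - y * meanSlope F y) -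
          signedPow p (F y - y * meanSlope F y) * F y)) := fun y =>
    mul_nonneg (by positivity) (sub_nonneg.2 (signedPow_mul_sub_le hp₀ hp₁ _ _))
  have hslope : ∀ y ∈ Ioo 0 L, deriv F y = 2 * meanSlope F y := by
    intro y hy
    have := deriv_eq_zero_of_le_endpoints
      ((continuousOn_meanFunctional hp₀ h.contDiff h₀).mono Icc_subset_Ici_self)
      (fun y hy => h.hasDerivAt_meanFunctional hp₀ hy hy.1.ne')
      (fun y hy => mul_nonneg hy.1.le (add_nonneg (sq_nonneg _) (hgap y))) hends y hy
    have := (mul_eq_zero.1 this).resolve_left hy.1.ne'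
    have := (add_eq_zero_iff_of_nonneg (sq_nonneg _) (hgap y)).1 this |>.1
    exact sub_eq_zero.1
      ((div_eq_zero_iff.1 (pow_eq_zero_iff two_ne_zero |>.1 this)).resolve_right hy.1.ne')
  have hconst : ∀ y ∈ Icc 0 L, meanSlope F y = 0 := fun y hy => by
    rw [eq_left_of_hasDerivAt_zero hq (fun z hz => ?_) y hy, meanSlope_zero]
    simpa [hslope z hz] using hasDerivAt_meanSlope h.contDiff hz.1.ne'
  have hF := eq_left_of_hasDerivAt_zero (a := 0) (b := L) h.contDiff.continuous.continuousOn
    fun y hy => by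
      simpa [hslope y hy, hconst y (Ioo_subset_Icc_self hy)] using
        hasDerivAt_of_contDiff_three h.contDiff y
  intro y hy
  rw [hF y hy, ← hF L ⟨hy.1.trans hy.2, le_rfl⟩, hL₀]

end MeanSlope

lemma deriv_zero_of_even {F : ℝ → ℝ} (heven : ∀ y, F (-y) = F y) : deriv F 0 = 0 := by
  have h := deriv_comp_neg F 0
  simp only [heven, neg_zero] at h
  linarith

lemma primitive_neg_eq_two_mul {F : ℝ → ℝ} (hF : Continuous F) (heven : ∀ y, F (-y) = F y)
    (R : ℝ) : primitive (-R) F R = 2 * primitive 0 F R := by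
  have hneg := primitive_neg_of_even heven R
  rw [primitive, intervalIntegral.integral_symm] at hneg
  rw [primitive, ← intervalIntegral.integral_add_adjacent_intervals
    (hF.intervalIntegrable (-R) 0) (hF.intervalIntegrable 0 R), neg_inj.1 hneg, primitive, two_mul]

theorem IsProfile.eq_zero_of_integral_eq_zero {p β : ℝ} (hp₀ : 0 < p) (hp₁ : p < 1)
    (hβ : 0 < β) {F : ℝ → ℝ} (h : IsProfile p β F) (hint : ∫ y, F y = 0) : F = 0 := by
  have heven := h.apply_neg hp₀ hβ
  obtain ⟨R, hzero⟩ := h.exists_forall_le_abs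
  have hR₀ := hzero R (le_abs_self R)
  rw [integral_eq_primitive fun y hy => (hzero y hy).eq_of_nhds,
    primitive_neg_eq_two_mul h.contDiff.continuous heven] at hint
  have habs := (h.toIsSolutionOn.mono (subset_univ _)).eq_zero_of_integral_eq_zero hp₀ hp₁ hβ
    (deriv_zero_of_even heven) hR₀.eq_of_nhds (by simpa using hR₀.deriv.eq_of_nhds)
    (by linarith)
  funext y
  rcases le_total R |y| with hy | hy
  · exact (hzero y hy).eq_of_nhds
  · rcases abs_choice y with h | h
    · exact h ▸ habs |y| ⟨abs_nonneg y, hy⟩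
    · rw [← heven, ← h]
      exact habs |y| ⟨abs_nonneg y, hy⟩

/-! ### Finite extinction at low energy -/

lemma exists_abs_deriv_le {f f' : ℝ → ℝ} (hf : ∀ y, HasDerivAt f (f' y) y) {x z d M : ℝ}
    (hd : 0 < d) (hxz : d ≤ z - x) (hx : |f x| ≤ M) (hz : |f z| ≤ M) :
    ∃ ξ ∈ Ioo x z, |f' ξ| ≤ 2 * M / d := by
  obtain ⟨ξ, hξ, hslope⟩ := exists_hasDerivAt_eq_slope f f' (by linarith : x < z)
    (fun y _ => (hf y).continuousAt.continuousWithinAt) fun y _ => hf y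
  refine ⟨ξ, hξ, ?_⟩
  have hdiff : |f z - f x| ≤ 2 * M := (abs_sub _ _).trans (by linarith)
  rw [hslope, abs_div, abs_of_pos (hd.trans_le hxz)]
  exact div_le_div₀ ((abs_nonneg _).trans hdiff) hdiff hd hxz

lemma abs_le_add_of_abs_deriv_le {f f' : ℝ → ℝ} (hf : ∀ y, HasDerivAt f (f' y) y) {a l M : ℝ}
    (hbound : ∀ x ∈ Icc a (a + l), |f' x| ≤ M) {x z : ℝ} (hx : x ∈ Icc a (a + l))
    (hz : z ∈ Icc a (a + l)) : |f x| ≤ |f z| + l * M := by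
  have hlip := (convex_Icc a (a + l)).norm_image_sub_le_of_norm_hasDerivWithin_le
    (fun y _ => (hf y).hasDerivWithinAt) hbound hz hx
  have hdist : |x - z| ≤ l := abs_le.2 ⟨by linarith [hx.1, hz.2], by linarith [hx.2, hz.1]⟩
  have hM : 0 ≤ M := (abs_nonneg _).trans (hbound x hx)
  calc |f x| ≤ |f z| + |f x - f z| := by linarith [abs_sub_abs_le_abs_sub (f x) (f z)]
    _ ≤ |f z| + M * |x - z| := by gcongr; exact hlip
    _ ≤ |f z| + l * M := by rw [mul_comm l]; gcongr

lemma abs_le_of_net {f f₁ f₂ : ℝ → ℝ} (hf : ∀ y, HasDerivAt f (f₁ y) y)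
    (hf₁ : ∀ y, HasDerivAt f₁ (f₂ y) y) {a l S ω : ℝ} (hl : 0 < l)
    (hnet : ∀ u, a ≤ u → u + l / 7 ≤ a + l → ∃ ξ ∈ Ioo u (u + l / 7), |f ξ| ≤ S)
    (hosc : ∀ x ∈ Icc a (a + l), ∀ z ∈ Icc a (a + l), |f₂ z - f₂ x| ≤ ω) :
    ∀ x ∈ Icc a (a + l), |f x| ≤ 211 * S + l ^ 2 * ω ∧ l * |f₁ x| ≤ 211 * S + l ^ 2 * ω ∧
      l ^ 2 * |f₂ x| ≤ 211 * S + l ^ 2 * ω := by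
  obtain ⟨x₁, h₁, hx₁⟩ := hnet a le_rfl (by linarith)
  obtain ⟨x₂, h₂, hx₂⟩ := hnet (a + 2 * (l / 7)) (by linarith) (by linarith)
  obtain ⟨x₃, h₃, hx₃⟩ := hnet (a + 4 * (l / 7)) (by linarith) (by linarith)
  obtain ⟨x₄, h₄, hx₄⟩ := hnet (a + 6 * (l / 7)) (by linarith) (by linarith)
  simp only [mem_Ioo] at h₁ h₂ h₃ h₄
  have hd : 0 < l / 7 := by positivity
  have hS : 0 ≤ S := (abs_nonneg _).trans hx₁
  obtain ⟨η₁, hη₁, hfη₁⟩ := exists_abs_deriv_le hf hd (by linarith) hx₁ hx₂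
  obtain ⟨η₂, hη₂, hfη₂⟩ := exists_abs_deriv_le hf hd (by linarith) hx₃ hx₄
  simp only [mem_Ioo] at hη₁ hη₂
  obtain ⟨ζ, hζ, hfζ⟩ := exists_abs_deriv_le hf₁ hd (by linarith) hfη₁ hfη₂
  simp only [mem_Ioo] at hζ
  have bound₂ : ∀ x ∈ Icc a (a + l), |f₂ x| ≤ 196 * S / l ^ 2 + ω := fun x hx => by
    have := hosc ζ ⟨by linarith, by linarith⟩ x hx
    have : 2 * (2 * S / (l / 7)) / (l / 7) = 196 * S / l ^ 2 := by field_simp; ring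
    linarith [abs_sub_abs_le_abs_sub (f₂ x) (f₂ ζ)]
  have bound₁ : ∀ x ∈ Icc a (a + l), |f₁ x| ≤ 210 * S / l + l * ω := fun x hx => by
    have := abs_le_add_of_abs_deriv_le hf₁ bound₂ hx (z := η₁) ⟨by linarith, by linarith⟩
    calc |f₁ x| ≤ 2 * S / (l / 7) + l * (196 * S / l ^ 2 + ω) := by linarith
      _ = 210 * S / l + l * ω := by field_simp; ring
  intro x hx
  have : 0 ≤ ω := (abs_nonneg _).trans (hosc x hx x hx)
  refine ⟨?_, ?_, ?_⟩
  · have := abs_le_add_of_abs_deriv_le hf bound₁ hx (z := x₁) ⟨by linarith, by linarith⟩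
    calc |f x| ≤ S + l * (210 * S / l + l * ω) := by linarith
      _ = 211 * S + l ^ 2 * ω := by field_simp; ring
  · calc l * |f₁ x| ≤ l * (210 * S / l + l * ω) := by gcongr; exact bound₁ x hx
      _ = 210 * S + l ^ 2 * ω := by field_simp
      _ ≤ 211 * S + l ^ 2 * ω := by linarith
  · calc l ^ 2 * |f₂ x| ≤ l ^ 2 * (196 * S / l ^ 2 + ω) := by gcongr; exact bound₂ x hx
      _ = 196 * S + l ^ 2 * ω := by field_simp
      _ ≤ 211 * S + l ^ 2 * ω := by linarith

lemma energy_le_of_abs_le {F : ℝ → ℝ} {y l M : ℝ} (hl : 0 < l) (h₀ : |F y| ≤ M)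
    (h₁ : l * |deriv F y| ≤ M) (h₂ : l ^ 2 * |deriv (deriv F) y| ≤ M) :
    energy F y ≤ 3 / 2 * (M / l) ^ 2 := by
  have hprod : -(F y * deriv (deriv F) y) ≤ |F y| * |deriv (deriv F) y| :=
    (neg_le_abs _).trans (abs_mul _ _).le
  have hM : 0 ≤ M := (abs_nonneg _).trans h₀
  refine le_of_mul_le_mul_left ?_ (pow_pos hl 2)
  calc l ^ 2 * energy F y ≤ (l * |deriv F y|) ^ 2 / 2 + |F y| * (l ^ 2 * |deriv (deriv F) y|) := by
        rw [energy, mul_pow, sq_abs]; nlinarith [pow_pos hl 2]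
    _ ≤ M ^ 2 / 2 + M * M := by gcongr
    _ = l ^ 2 * (3 / 2 * (M / l) ^ 2) := by field_simp; ring

lemma abs_signedPow_le_add {p : ℝ} (hp : 0 < p) {S : ℝ} (hS : 0 < S) (s : ℝ) :
    |signedPow p s| ≤ S ^ p + |s| ^ (p + 1) / S := by
  have h₀ : 0 ≤ S ^ p := by positivity
  rcases le_total |s| S with hs | hs
  · exact (abs_signedPow_le hp hs).trans (le_add_of_nonneg_right (by positivity))
  · refine le_add_of_nonneg_of_le h₀ ?_
    rw [le_div_iff₀ hS, abs_signedPow hp.ne', Real.rpow_add_one (hS.trans_le hs).ne']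
    gcongr

namespace IsSolutionOn

variable {p β u v S : ℝ} {F : ℝ → ℝ}

lemma exists_abs_le_of_energy_sub_le (hp : 0 < p) (hβ : 0 < β) (hu : 0 < u) (huv : u < v)
    (hS : 0 ≤ S) (h : IsSolutionOn p β F (Icc u v))
    (hdrop : energy F u - energy F v ≤ β * u * (v - u) * S ^ (p + 1)) :
    ∃ ξ ∈ Ioo u v, |F ξ| ≤ S := by
  obtain ⟨ξ, hξ, hslope⟩ := exists_hasDerivAt_eq_slope (energy F) _ huv
    (continuous_energy h.contDiff).continuousOn
    fun y hy => h.hasDerivAt_energy hp (Ioo_subset_Icc_self hy)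
  refine ⟨ξ, hξ, ?_⟩
  have hvu : 0 < v - u := sub_pos.2 huv
  rw [eq_div_iff hvu.ne'] at hslope
  have hmul : β * (v - u) * u * |F ξ| ^ (p + 1) ≤ β * (v - u) * u * S ^ (p + 1) :=
    calc β * (v - u) * u * |F ξ| ^ (p + 1) ≤ β * (v - u) * ξ * |F ξ| ^ (p + 1) := by
          gcongr; exact hξ.1.le
      _ ≤ β * (v - u) * u * S ^ (p + 1) := by linarith
  exact (Real.rpow_le_rpow_iff (abs_nonneg _) hS (by linarith)).1
    (le_of_mul_le_mul_left hmul (by positivity))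

lemma abs_deriv_deriv_sub_le (hp : 0 < p) (hβ : 0 ≤ β) (hu : 0 ≤ u) (huv : u ≤ v) (hS : 0 < S)
    (h : IsSolutionOn p β F (Icc u v)) :
    |deriv (deriv F) v - deriv (deriv F) u| ≤
      β * v * S ^ p * (v - u) + (energy F u - energy F v) / S := by
  have hcont : Continuous (deriv (deriv F)) := (contDiff_one_deriv_deriv h.contDiff).continuous
  refine image_norm_le_of_norm_deriv_right_le_deriv_boundary' (a := u) (b := v)
    (f := fun y => deriv (deriv F) y - deriv (deriv F) u)
    (B := fun y => β * v * S ^ p * (y - u) + (energy F u - energy F y) / S)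
    (B' := fun y => β * v * S ^ p + β * y * |F y| ^ (p + 1) / S)
    (hcont.sub continuous_const).continuousOn (fun y hy =>
      ((h.hasDerivAt_deriv_deriv (Ico_subset_Icc_self hy)).sub_const _).hasDerivWithinAt)
    (by simp) ?_ (fun y hy => ?_) (fun y hy => ?_) (right_mem_Icc.2 huv)
  · exact ((continuous_const.mul (continuous_id.sub continuous_const)).add
      ((continuous_const.sub (continuous_energy h.contDiff)).div_const S)).continuousOn
  · refine (((((hasDerivAt_id y).sub_const u).const_mul (β * v * S ^ p)).add
      (((h.hasDerivAt_energy hp (Ico_subset_Icc_self hy)).const_sub _).div_const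
        S)).congr_deriv ?_).hasDerivWithinAt
    rw [mul_one, neg_neg]
  · have hy₀ : 0 ≤ y := hu.trans hy.1
    calc |β * y * signedPow p (F y)| = β * y * |signedPow p (F y)| := by
          rw [abs_mul, abs_of_nonneg (mul_nonneg hβ hy₀)]
      _ ≤ β * y * (S ^ p + |F y| ^ (p + 1) / S) := by
          gcongr; exact abs_signedPow_le_add hp hS _
      _ = β * y * S ^ p + β * y * |F y| ^ (p + 1) / S := by ring
      _ ≤ β * v * S ^ p + β * y * |F y| ^ (p + 1) / S := by gcongr; exact hy.2.le

end IsSolutionOn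

namespace IsSolutionOn

variable {p β r l S : ℝ} {F : ℝ → ℝ}

lemma abs_deriv_deriv_sub_le_of_energy_sub_le (hp : 0 < p) (hβ : 0 < β) (hr : 0 ≤ r) (hl : 0 < l)
    (hrl : r + l ≤ 1) (hS : 0 < S) (h : IsSolutionOn p β F (Icc r (r + l)))
    (hdrop : energy F r - energy F (r + l) ≤ β * r * (l / 7) * S ^ (p + 1)) :
    ∀ x ∈ Icc r (r + l), ∀ z ∈ Icc r (r + l),
      |deriv (deriv F) z - deriv (deriv F) x| ≤ 2 * β * l * S ^ p := by
  have hmem_left : r ∈ Icc r (r + l) := left_mem_Icc.2 (by linarith)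
  have hmem_right : r + l ∈ Icc r (r + l) := right_mem_Icc.2 (by linarith)
  have hanti := h.antitoneOn_energy hp hβ.le hr
  have hosc_le : ∀ x ∈ Icc r (r + l), ∀ z ∈ Icc r (r + l), x ≤ z →
      |deriv (deriv F) z - deriv (deriv F) x| ≤ 2 * β * l * S ^ p := by
    intro x hx z hz hxz
    have hEx : energy F x ≤ energy F r := hanti hmem_left hx hx.1
    have hEz : energy F (r + l) ≤ energy F z := hanti hz hmem_right hz.2
    calc |deriv (deriv F) z - deriv (deriv F) x|
        ≤ β * z * S ^ p * (z - x) + (energy F x - energy F z) / S :=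
          abs_deriv_deriv_sub_le hp hβ.le (hr.trans hx.1) hxz hS
            (h.mono (Icc_subset_Icc hx.1 hz.2))
      _ ≤ β * 1 * S ^ p * l + β * 1 * (l / 7) * S ^ (p + 1) / S := by
          gcongr
          · linarith [hz.2]
          · linarith [hx.1, hz.2]
          · have : β * r * (l / 7) * S ^ (p + 1) ≤ β * 1 * (l / 7) * S ^ (p + 1) := by
              gcongr; linarith
            linarith
      _ = 8 / 7 * (β * l * S ^ p) := by rw [Real.rpow_add_one hS.ne']; field_simp; ring
      _ ≤ 2 * β * l * S ^ p := by
          have : 0 < β * l * S ^ p := by positivity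
          linarith
  exact fun x hx z hz => (le_total x z).elim (hosc_le x hx z hz) fun hzx => by
    rw [abs_sub_comm]; exact hosc_le z hz x hx hzx

lemma energy_le_of_energy_sub_le (hp : 0 < p) (hβ : 0 < β) (hr : 0 < r) (hl : 0 < l)
    (hrl : r + l ≤ 1) (hS : 0 < S) (h : IsSolutionOn p β F (Icc r (r + l)))
    (hdrop : energy F r - energy F (r + l) ≤ β * r * (l / 7) * S ^ (p + 1)) :
    energy F (r + l) ≤ 3 / 2 * ((211 * S + l ^ 2 * (2 * β * l * S ^ p)) / l) ^ 2 := by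
  have hmem_left : r ∈ Icc r (r + l) := left_mem_Icc.2 (by linarith)
  have hmem_right : r + l ∈ Icc r (r + l) := right_mem_Icc.2 (by linarith)
  have hanti := h.antitoneOn_energy hp hβ.le hr.le
  have hnet : ∀ u, r ≤ u → u + l / 7 ≤ r + l → ∃ ξ ∈ Ioo u (u + l / 7), |F ξ| ≤ S := by
    intro u hru hul
    have hu : energy F u ≤ energy F r := hanti hmem_left ⟨hru, by linarith⟩ hru
    have hv : energy F (r + l) ≤ energy F (u + l / 7) :=
      hanti ⟨by linarith, hul⟩ hmem_right hul
    refine exists_abs_le_of_energy_sub_le hp hβ (hr.trans_le hru) (by linarith) hS.le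
      (h.mono (Icc_subset_Icc hru hul)) ?_
    calc energy F u - energy F (u + l / 7) ≤ β * r * (l / 7) * S ^ (p + 1) := by linarith
      _ ≤ β * u * (u + l / 7 - u) * S ^ (p + 1) := by rw [add_sub_cancel_left]; gcongr
  obtain ⟨h₀, h₁, h₂⟩ := abs_le_of_net (hasDerivAt_of_contDiff_three h.contDiff)
    (hasDerivAt_deriv_of_contDiff_three h.contDiff) hl hnet
    (h.abs_deriv_deriv_sub_le_of_energy_sub_le hp hβ hr.le hl hrl hS hdrop) (r + l) hmem_right
  exact energy_le_of_abs_le hl h₀ h₁ h₂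

/-- The step `l` is the one at which the two terms of `energy_le_of_energy_sub_le` scale alike. -/
lemma energy_le_mul_sq {s σ : ℝ} (hp : 0 < p) (hβ : 0 < β) (hr : 1 / 2 ≤ r)
    (hl : 0 < l) (hrl : r + l ≤ 1) (hs : 0 < s) (hσ : 0 < σ)
    (h : IsSolutionOn p β F (Icc r (r + l))) (hE : energy F r = s ^ 2)
    (hstep : β * l ^ (2 + p) = s ^ (1 - p)) :
    energy F (r + l) ≤
      max (1 - σ ^ (p + 1) / 14) (3 / 2 * (211 * σ + 2 * σ ^ p) ^ 2) * s ^ 2 := by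
  set S := σ * l * s
  have hdrop_scale : β * l * S ^ (p + 1) = σ ^ (p + 1) * s ^ 2 :=
    calc β * l * S ^ (p + 1)
        = σ ^ (p + 1) * (β * (l * l ^ (p + 1))) * s ^ (p + 1) := by
          rw [Real.mul_rpow (by positivity) hs.le, Real.mul_rpow hσ.le hl.le]; ring
      _ = σ ^ (p + 1) * (β * l ^ (2 + p)) * s ^ (p + 1) := by
          rw [mul_comm l, ← Real.rpow_add_one hl.ne']; ring_nf
      _ = σ ^ (p + 1) * s ^ 2 := by
          rw [hstep, mul_assoc, ← Real.rpow_add hs, ← Real.rpow_natCast]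
          congr 2; push_cast; ring
  have hosc_scale : β * l ^ 2 * S ^ p = σ ^ p * s := by
    refine mul_right_cancel₀ (by positivity : S ≠ 0) ?_
    calc β * l ^ 2 * S ^ p * S = l * (β * l * S ^ (p + 1)) := by
          rw [Real.rpow_add_one (by positivity)]; ring
      _ = σ ^ p * s * S := by rw [hdrop_scale, Real.rpow_add_one hσ.ne']; ring
  by_cases hdrop : energy F r - energy F (r + l) ≤ β * r * (l / 7) * S ^ (p + 1)
  · calc energy F (r + l) ≤ 3 / 2 * ((211 * S + l ^ 2 * (2 * β * l * S ^ p)) / l) ^ 2 :=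
          h.energy_le_of_energy_sub_le hp hβ (by linarith) hl hrl (by positivity) hdrop
      _ = 3 / 2 * (211 * σ * s + 2 * (β * l ^ 2 * S ^ p)) ^ 2 := by
          congr 2; simp only [S]; field_simp
      _ = 3 / 2 * (211 * σ + 2 * σ ^ p) ^ 2 * s ^ 2 := by rw [hosc_scale]; ring
      _ ≤ _ := by gcongr; exact le_max_right _ _
  · rw [not_le] at hdrop
    calc energy F (r + l) ≤ s ^ 2 - r * (β * l * S ^ (p + 1)) / 7 := by
          rw [← hE]; linarith
      _ = (1 - r * σ ^ (p + 1) / 7) * s ^ 2 := by rw [hdrop_scale]; ring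
      _ ≤ (1 - 1 / 2 * σ ^ (p + 1) / 7) * s ^ 2 := by gcongr
      _ = (1 - σ ^ (p + 1) / 14) * s ^ 2 := by ring
      _ ≤ _ := by gcongr; exact le_max_left _ _

lemma exists_energy_decay_factor (hp : 0 < p) : ∃ q ∈ Ioo (0 : ℝ) 1, ∀ {β r l s : ℝ} {F : ℝ → ℝ},
    0 < β → 1 / 2 ≤ r → 0 < l → r + l ≤ 1 → 0 < s → IsSolutionOn p β F (Icc r (r + l)) →
    energy F r = s ^ 2 → β * l ^ (2 + p) = s ^ (1 - p) → energy F (r + l) ≤ q * s ^ 2 := by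
  obtain ⟨σ, hσ, hsmall⟩ : ∃ σ > 0, 3 / 2 * (211 * σ + 2 * σ ^ p) ^ 2 < (1 : ℝ) := by
    have hcont : Continuous fun σ : ℝ => 3 / 2 * (211 * σ + 2 * σ ^ p) ^ 2 := by
      have := Real.continuous_rpow_const hp.le
      fun_prop
    have hev : ∀ᶠ σ in 𝓝[>] (0 : ℝ), 3 / 2 * (211 * σ + 2 * σ ^ p) ^ 2 < (1 : ℝ) :=
      nhdsWithin_le_nhds (hcont.continuousAt.eventually (gt_mem_nhds
        (by simp [Real.zero_rpow hp.ne'])))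
    obtain ⟨σ, hlt, hpos⟩ := (hev.and self_mem_nhdsWithin).exists
    exact ⟨σ, hpos, hlt⟩
  refine ⟨max (1 - σ ^ (p + 1) / 14) (3 / 2 * (211 * σ + 2 * σ ^ p) ^ 2),
    ⟨lt_max_of_lt_right (by positivity), max_lt ?_ hsmall⟩,
    fun hβ hr hl hrl hs h hE hstep => h.energy_le_mul_sq hp hβ hr hl hrl hs hσ hE hstep⟩
  have : 0 < σ ^ (p + 1) := by positivity
  linarith

end IsSolutionOn

/-- `C / (1 - q) * w a` is the sum of the geometric series of steps. -/
lemma exists_eq_zero_of_geometric_decay {w : ℝ → ℝ} {a b C q : ℝ} (hab : a ≤ b) (hC : 0 < C)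
    (hq₀ : 0 ≤ q) (hq : q < 1) (hcont : ContinuousOn w (Icc a b)) (hw : ∀ y ∈ Icc a b, 0 ≤ w y)
    (hdecay : ∀ r ∈ Icc a b, 0 < w r → r + C * w r ≤ b → w (r + C * w r) ≤ q * w r)
    (hroom : a + C / (1 - q) * w a < b) : ∃ r ∈ Ico a b, w r = 0 := by
  set Λ := C / (1 - q)
  have hq' : 0 < 1 - q := sub_pos.2 hq
  have hΛ : 0 < Λ := div_pos hC hq'
  have hΛC : C + Λ * q = Λ := by simp only [Λ]; field_simp; ring
  set K := Icc a b ∩ (fun y => y + Λ * w y) ⁻¹' Iic (a + Λ * w a)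
  have hKclosed : IsClosed K :=
    (continuousOn_id.add (continuousOn_const.mul hcont)).preimage_isClosed_of_isClosed
      isClosed_Icc isClosed_Iic
  obtain ⟨r, ⟨hr, hrle : r + Λ * w r ≤ a + Λ * w a⟩, hmax⟩ :=
    (isCompact_Icc.of_isClosed_subset hKclosed inter_subset_left).exists_isGreatest
      ⟨a, left_mem_Icc.2 hab, mem_preimage.2 (mem_Iic.2 le_rfl)⟩
  have hw₀ : 0 ≤ Λ * w r := mul_nonneg hΛ.le (hw r hr)
  refine ⟨r, ⟨hr.1, by linarith⟩, (hw r hr).antisymm' (not_lt.1 fun hpos => ?_)⟩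
  have hCw : 0 < C * w r := mul_pos hC hpos
  have hΛw : C * w r + Λ * (q * w r) = Λ * w r := by rw [← mul_assoc, ← add_mul, hΛC]
  have hwa : 0 ≤ Λ * (q * w r) := by positivity
  have hstep : r + C * w r ≤ b := by linarith
  have hnext : Λ * w (r + C * w r) ≤ Λ * (q * w r) := by
    gcongr
    exact hdecay r hr hpos hstep
  have hmem : r + C * w r ∈ K := by
    refine ⟨⟨hr.1.trans (by linarith), hstep⟩, ?_⟩
    rw [mem_preimage, mem_Iic]
    linarith
  linarith [hmax hmem]

lemma IsSolutionOn.exists_sqrt_energy_rpow_decay {p β : ℝ} (hp₀ : 0 < p) (hp₁ : p < 1)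
    (hβ : 0 < β) : ∃ κ > (0 : ℝ), ∃ C > 0, ∃ q ∈ Ico (0 : ℝ) 1, ∀ {r l : ℝ} {F : ℝ → ℝ}, 1 / 2 ≤ r →
      r + l ≤ 1 → 0 < energy F r → l = C * √(energy F r) ^ κ → IsSolutionOn p β F (Icc r (r + l)) →
      √(energy F (r + l)) ^ κ ≤ q * √(energy F r) ^ κ := by
  obtain ⟨q, ⟨hq₀, hq₁⟩, hfactor⟩ := exists_energy_decay_factor hp₀
  have hκ : 0 < (1 - p) / (2 + p) := div_pos (by linarith) (by linarith)
  have hκp : (1 - p) / (2 + p) * (2 + p) = 1 - p := div_mul_cancel₀ _ (by linarith)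
  refine ⟨(1 - p) / (2 + p), hκ, β⁻¹ ^ (2 + p)⁻¹, by positivity, √q ^ ((1 - p) / (2 + p)),
    ⟨by positivity,
      Real.rpow_lt_one (Real.sqrt_nonneg q) ((Real.sqrt_lt' one_pos).2 (by simpa)) hκ⟩,
    fun {r l F} hr hrl hE hl h => ?_⟩
  have hs : 0 < √(energy F r) := Real.sqrt_pos.2 hE
  have hsq : energy F r = √(energy F r) ^ 2 := (Real.sq_sqrt hE.le).symm
  have hl₀ : 0 < l := by rw [hl]; positivity
  have hscale : β * l ^ (2 + p) = √(energy F r) ^ (1 - p) := by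
    rw [hl, Real.mul_rpow (by positivity) (by positivity),
      Real.rpow_inv_rpow (by positivity) (by linarith), ← Real.rpow_mul hs.le, hκp,
      mul_inv_cancel_left₀ hβ.ne']
  have hdecay := hfactor hβ hr hl₀ hrl hs h hsq hscale
  rw [← Real.mul_rpow (by positivity) hs.le, ← Real.sqrt_mul hq₀.le]
  gcongr
  rwa [← hsq] at hdecay

lemma IsSolutionOn.exists_extinction {p β : ℝ} (hp₀ : 0 < p) (hp₁ : p < 1) (hβ : 0 < β) :
    ∃ η > 0, ∀ F : ℝ → ℝ, IsSolutionOn p β F (Icc 0 1) → F 1 = 0 → energy F 0 ≤ η →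
      ∃ R ∈ Ioo (0 : ℝ) 1, ∀ y ∈ Ioo R 1, F y = 0 := by
  obtain ⟨κ, hκ, C, hC, q, ⟨hq₀, hq₁⟩, hdecay⟩ := exists_sqrt_energy_rpow_decay hp₀ hp₁ hβ
  set Λ := C / (1 - q)
  have hΛ : 0 < Λ := div_pos hC (sub_pos.2 hq₁)
  refine ⟨((4 * Λ)⁻¹ ^ κ⁻¹) ^ 2, by positivity, fun F h hF₁ hη => ?_⟩
  have hanti := h.antitoneOn_energy hp₀ hβ.le le_rfl
  have hE₁ : 0 ≤ energy F 1 := by rw [energy, hF₁, zero_mul, sub_zero]; positivity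
  have hroom : 1 / 2 + Λ * √(energy F (1 / 2)) ^ κ < 1 := by
    have hE : energy F (1 / 2) ≤ ((4 * Λ)⁻¹ ^ κ⁻¹) ^ 2 :=
      (hanti (by norm_num) (by norm_num) (by norm_num)).trans hη
    have hw : √(energy F (1 / 2)) ^ κ ≤ (4 * Λ)⁻¹ :=
      calc √(energy F (1 / 2)) ^ κ ≤ ((4 * Λ)⁻¹ ^ κ⁻¹) ^ κ := by
            gcongr
            exact Real.sqrt_le_iff.2 ⟨by positivity, hE⟩
        _ = (4 * Λ)⁻¹ := Real.rpow_inv_rpow (by positivity) hκ.ne'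
    have : Λ * √(energy F (1 / 2)) ^ κ ≤ Λ * (4 * Λ)⁻¹ := by gcongr
    have : Λ * (4 * Λ)⁻¹ = 1 / 4 := by field_simp
    linarith
  obtain ⟨R, ⟨hR, hR₁⟩, hwR⟩ := exists_eq_zero_of_geometric_decay
    (w := fun y => √(energy F y) ^ κ) (b := 1) (by norm_num) hC hq₀ hq₁
    (((continuous_energy h.contDiff).sqrt.rpow_const fun _ => Or.inr hκ.le).continuousOn)
    (fun y _ => by positivity) (fun r hr hw hrl => hdecay hr.1 hrl (not_le.1 fun hE => hw.ne' <| by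
      rw [Real.sqrt_eq_zero_of_nonpos hE, Real.zero_rpow hκ.ne']) rfl
        (h.mono (Icc_subset_Icc (by linarith [hr.1]) hrl))) hroom
  have hER : energy F R ≤ 0 :=
    Real.sqrt_eq_zero'.1 ((Real.rpow_eq_zero (Real.sqrt_nonneg _) hκ.ne').1 hwR)
  have hR₀ : 0 < R := by linarith
  exact ⟨R, ⟨hR₀, hR₁⟩, eq_zero_of_energy_le hp₀ hβ hR₀.le (h.mono (Icc_subset_Icc_left hR₀.le))
    (hER.trans hE₁)⟩

/-! ### A boundary value problem with bounded right-hand side -/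

lemma exists_subseq_tendstoUniformlyOn {a b B : ℝ} (hab : a ≤ b) {K : NNReal} {u : ℕ → ℝ → ℝ}
    (hlip : ∀ N, LipschitzOnWith K (u N) (Icc a b)) (hB : ∀ N, ∀ y ∈ Icc a b, |u N y| ≤ B) :
    ∃ v : ℝ → ℝ, Continuous v ∧ ∃ ψ : ℕ → ℕ, StrictMono ψ ∧
      TendstoUniformlyOn (fun k => u (ψ k)) v atTop (Icc a b) := by
  let f : ℕ → BoundedContinuousFunction (Icc a b) ℝ := fun N =>
    BoundedContinuousFunction.mkOfCompact
      ⟨(Icc a b).domRestrict (u N), (hlip N).to_restrict.continuous⟩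
  have hequi : Equicontinuous fun g : range f => ⇑(g : BoundedContinuousFunction (Icc a b) ℝ) := by
    refine (LipschitzWith.uniformEquicontinuous _ K ?_).equicontinuous
    rintro ⟨_, N, rfl⟩
    exact (hlip N).to_restrict
  have hcompact : IsCompact (closure (range f)) := by
    refine BoundedContinuousFunction.arzela_ascoli (Icc (-B) B) isCompact_Icc _ ?_ hequi
    rintro _ x ⟨N, rfl⟩
    exact abs_le.1 (hB N x x.2)
  obtain ⟨v, -, ψ, hψ, hv⟩ := hcompact.tendsto_subseq fun N => subset_closure (mem_range_self N)
  refine ⟨IccExtend hab v, v.continuous.Icc_extend', ψ, hψ, ?_⟩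
  rw [tendstoUniformlyOn_iff_tendstoUniformly_comp_coe]
  have hext : IccExtend hab v ∘ Subtype.val = v := funext fun x => IccExtend_val hab v x
  rw [hext]
  exact BoundedContinuousFunction.tendsto_iff_tendstoUniformly.1 hv

section Primitive

variable {f g : ℝ → ℝ} {M b : ℝ}

lemma abs_primitive_le (hM : ∀ t ∈ Icc (0 : ℝ) 1, |f t| ≤ M) :
    ∀ y ∈ Icc (0 : ℝ) 1, |primitive 0 f y| ≤ M := by
  intro y hy
  have hM₀ : 0 ≤ M := (abs_nonneg _).trans (hM y hy)
  calc |primitive 0 f y| ≤ M * |y - 0| :=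
        intervalIntegral.norm_integral_le_of_norm_le_const (f := f) fun t ht => by
          rw [uIoc_of_le hy.1] at ht
          exact hM t ⟨ht.1.le, ht.2.trans hy.2⟩
    _ ≤ M := by
      rw [sub_zero, abs_of_nonneg hy.1]
      exact mul_le_of_le_one_right hM₀ hy.2

lemma eqOn_primitive (h : EqOn f g (Icc 0 b)) : EqOn (primitive 0 f) (primitive 0 g) (Icc 0 b) :=
  fun y hy => intervalIntegral.integral_congr fun t ht => by
    rw [uIcc_of_le hy.1] at ht
    exact h ⟨ht.1, ht.2.trans hy.2⟩

lemma tendsto_primitive {s : ℕ → ℝ → ℝ} (hs : ∀ k, Continuous (s k))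
    (hM : ∀ k, ∀ t ∈ Icc (0 : ℝ) 1, |s k t| ≤ M)
    (hlim : ∀ t ∈ Icc (0 : ℝ) 1, Tendsto (fun k => s k t) atTop (𝓝 (f t))) :
    ∀ y ∈ Icc (0 : ℝ) 1, Tendsto (fun k => primitive 0 (s k) y) atTop (𝓝 (primitive 0 f y)) := by
  intro y hy
  have hsub : ∀ t ∈ uIoc 0 y, t ∈ Icc (0 : ℝ) 1 := fun t ht => by
    rw [uIoc_of_le hy.1] at ht
    exact ⟨ht.1.le, ht.2.trans hy.2⟩
  exact intervalIntegral.tendsto_integral_filter_of_dominated_convergence (fun _ => M)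
    (Eventually.of_forall fun k => (hs k).aestronglyMeasurable)
    (Eventually.of_forall fun k => ae_of_all _ fun t ht => hM k t (hsub t ht))
    intervalIntegrable_const (ae_of_all _ fun t ht => hlim t (hsub t ht))

lemma continuous_uncurry_primitive {f : ℝ → ℝ → ℝ} (hf : Continuous (Function.uncurry f)) :
    Continuous (Function.uncurry fun a => primitive 0 (f a)) :=
  intervalIntegral.continuous_parametric_intervalIntegral_of_continuous 
    (f := fun x : ℝ × ℝ => f x.1)
    (hf.comp (by fun_prop : Continuous fun x : (ℝ × ℝ) × ℝ => (x.1.1, x.2))) continuous_snd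

end Primitive

/-- The threefold primitive, all of whose derivatives of order at most two vanish at the origin. -/
noncomputable def triplePrimitive (s : ℝ → ℝ) : ℝ → ℝ := primitive 0 (primitive 0 (primitive 0 s))

/-- The solution of `v''' = s` on `[0, 1]` with `v 0 = c`, `v' 0 = 0` and `v 1 = 0`. -/
noncomputable def bvpSolution (c : ℝ) (s : ℝ → ℝ) (y : ℝ) : ℝ :=
  c - (c + triplePrimitive s 1) * y ^ 2 + triplePrimitive s y

section BVP

variable {c M : ℝ} {s : ℝ → ℝ}

@[simp] lemma triplePrimitive_zero (s : ℝ → ℝ) : triplePrimitive s 0 = 0 := primitive_self _ _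

lemma contDiff_triplePrimitive (hs : Continuous s) : ContDiff ℝ 3 (triplePrimitive s) :=
  contDiff_primitive (m := 2) (contDiff_primitive (m := 1)
    (contDiff_primitive (m := 0) (contDiff_zero.2 hs) 0) 0) 0

lemma abs_triplePrimitive_le (hM : ∀ t ∈ Icc (0 : ℝ) 1, |s t| ≤ M) :
    ∀ y ∈ Icc (0 : ℝ) 1, |triplePrimitive s y| ≤ M :=
  abs_primitive_le (abs_primitive_le (abs_primitive_le hM))

lemma eqOn_triplePrimitive {b : ℝ} {s' : ℝ → ℝ} (h : EqOn s s' (Icc 0 b)) :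
    EqOn (triplePrimitive s) (triplePrimitive s') (Icc 0 b) :=
  eqOn_primitive (eqOn_primitive (eqOn_primitive h))

lemma tendsto_triplePrimitive {S : ℕ → ℝ → ℝ} (hS : ∀ k, Continuous (S k))
    (hM : ∀ k, ∀ t ∈ Icc (0 : ℝ) 1, |S k t| ≤ M)
    (hlim : ∀ t ∈ Icc (0 : ℝ) 1, Tendsto (fun k => S k t) atTop (𝓝 (s t))) :
    ∀ y ∈ Icc (0 : ℝ) 1,
      Tendsto (fun k => triplePrimitive (S k) y) atTop (𝓝 (triplePrimitive s y)) :=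
  tendsto_primitive (fun k => continuous_primitive (continuous_primitive (hS k) 0) 0)
    (fun k => abs_primitive_le (abs_primitive_le (hM k)))
    (tendsto_primitive (fun k => continuous_primitive (hS k) 0) (fun k => abs_primitive_le (hM k))
      (tendsto_primitive hS hM hlim))

lemma continuous_uncurry_triplePrimitive {f : ℝ → ℝ → ℝ} (hf : Continuous (Function.uncurry f)) :
    Continuous (Function.uncurry fun a => triplePrimitive (f a)) :=
  continuous_uncurry_primitive (continuous_uncurry_primitive (continuous_uncurry_primitive hf))

lemma hasDerivAt_bvpSolution (hs : Continuous s) (c y : ℝ) : HasDerivAt (bvpSolution c s)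
    (primitive 0 (primitive 0 s) y - (c + triplePrimitive s 1) * (2 * y)) y := by
  refine ((((hasDerivAt_pow 2 y).const_mul _).const_sub c).add (hasDerivAt_primitive
    (continuous_primitive (continuous_primitive hs 0) 0) 0 y)).congr_deriv ?_
  push_cast
  ring

lemma deriv_bvpSolution (hs : Continuous s) (c : ℝ) : deriv (bvpSolution c s) =
    fun y => primitive 0 (primitive 0 s) y - (c + triplePrimitive s 1) * (2 * y) :=
  funext fun y => (hasDerivAt_bvpSolution hs c y).deriv

lemma deriv_deriv_bvpSolution (hs : Continuous s) (c : ℝ) : deriv (deriv (bvpSolution c s)) =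
    fun y => primitive 0 s y - 2 * (c + triplePrimitive s 1) := by
  rw [deriv_bvpSolution hs]
  refine funext fun y => HasDerivAt.deriv ?_
  refine ((hasDerivAt_primitive (continuous_primitive hs 0) 0 y).sub
    (((hasDerivAt_id y).const_mul 2).const_mul (c + triplePrimitive s 1))).congr_deriv ?_
  ring

lemma deriv_deriv_deriv_bvpSolution (hs : Continuous s) (c : ℝ) :
    deriv (deriv (deriv (bvpSolution c s))) = s := by
  rw [deriv_deriv_bvpSolution hs]
  exact funext fun y => ((hasDerivAt_primitive hs 0 y).sub_const _).deriv

lemma contDiff_bvpSolution (hs : Continuous s) (c : ℝ) : ContDiff ℝ 3 (bvpSolution c s) :=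
  (contDiff_const.sub (contDiff_const.mul (contDiff_id.pow 2))).add (contDiff_triplePrimitive hs)

lemma abs_bvpSolution_le (hM : ∀ t ∈ Icc (0 : ℝ) 1, |s t| ≤ M) :
    ∀ y ∈ Icc (0 : ℝ) 1, |bvpSolution c s y| ≤ |c| + 2 * M := by
  intro y hy
  have hy₁ : y ^ 2 ≤ 1 := pow_le_one₀ hy.1 hy.2
  have h₁ : |triplePrimitive s 1| ≤ M := abs_triplePrimitive_le hM 1 (right_mem_Icc.2 zero_le_one)
  calc |bvpSolution c s y|
      = |c * (1 - y ^ 2) + (triplePrimitive s y - triplePrimitive s 1 * y ^ 2)| := by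
        rw [bvpSolution]; ring_nf
    _ ≤ |c| * (1 - y ^ 2) + (|triplePrimitive s y| + |triplePrimitive s 1| * y ^ 2) := by
        refine (abs_add_le _ _).trans (add_le_add ?_ ((abs_sub _ _).trans ?_))
        · rw [abs_mul, abs_of_nonneg (sub_nonneg.2 hy₁)]
        · rw [abs_mul, abs_of_nonneg (sq_nonneg y)]
    _ ≤ |c| * 1 + (M + M * 1) := by
        gcongr
        · linarith [sq_nonneg y]
        · exact abs_triplePrimitive_le hM y hy
        · exact (abs_nonneg _).trans h₁
    _ = |c| + 2 * M := by ring

lemma lipschitzOnWith_bvpSolution {K : NNReal} (hs : Continuous s)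
    (hM : ∀ t ∈ Icc (0 : ℝ) 1, |s t| ≤ M) (hK : 2 * |c| + 3 * M ≤ K) :
    LipschitzOnWith K (bvpSolution c s) (Icc 0 1) := by
  refine (convex_Icc 0 1).lipschitzOnWith_of_nnnorm_hasDerivWithin_le
    (fun y _ => (hasDerivAt_bvpSolution hs c y).hasDerivWithinAt) fun y hy => ?_
  have h₁ : |triplePrimitive s 1| ≤ M := abs_triplePrimitive_le hM 1 (right_mem_Icc.2 zero_le_one)
  rw [← NNReal.coe_le_coe, coe_nnnorm]
  calc |primitive 0 (primitive 0 s) y - (c + triplePrimitive s 1) * (2 * y)|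
      ≤ |primitive 0 (primitive 0 s) y| + (|c| + |triplePrimitive s 1|) * (2 * y) := by
        refine (abs_sub _ _).trans (add_le_add_right ?_ _)
        rw [abs_mul, abs_of_nonneg (by linarith [hy.1] : 0 ≤ 2 * y)]
        gcongr
        · linarith [hy.1]
        · exact abs_add_le _ _
    _ ≤ M + (|c| + M) * (2 * 1) := by
        have : 0 ≤ M := (abs_nonneg _).trans h₁
        gcongr
        · exact abs_primitive_le (abs_primitive_le hM) y hy
        · linarith [hy.1]
        · exact hy.2
    _ ≤ K := by linarith

end BVP

/-- Picard iterates for the third-order equation with right-hand side `G t v` and initial data `c`,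
`0`, `-2 a`, where the argument of `v` is delayed by `δ` (Tonelli's scheme). Thanks to the delay the
iterates become stationary on `[0, 1]` after finitely many steps. -/
noncomputable def delayedIterate (G : ℝ → ℝ → ℝ) (c δ : ℝ) : ℕ → ℝ → ℝ → ℝ
  | 0 => fun a y => c - a * y ^ 2
  | j + 1 => fun a y => c - a * y ^ 2 +
      triplePrimitive (fun t => G t (delayedIterate G c δ j a (max (t - δ) 0))) y

section Tonelli

variable {G : ℝ → ℝ → ℝ} {M : ℝ}

lemma continuous_uncurry_delayedIterate (hG : Continuous (Function.uncurry G)) (c δ : ℝ) (j : ℕ) :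
    Continuous (Function.uncurry (delayedIterate G c δ j)) := by
  have hbase : Continuous fun x : ℝ × ℝ => c - x.1 * x.2 ^ 2 := by fun_prop
  induction j with
  | zero => exact hbase
  | succ j ih =>
    exact hbase.add (continuous_uncurry_triplePrimitive
      (f := fun a t => G t (delayedIterate G c δ j a (max (t - δ) 0)))
      (hG.comp (continuous_snd.prodMk (ih.comp
        (by fun_prop : Continuous fun x : ℝ × ℝ => (x.1, max (x.2 - δ) 0))))))

lemma eqOn_delayedIterate_succ (G : ℝ → ℝ → ℝ) (c a : ℝ) {δ : ℝ} (hδ : 0 ≤ δ) (j : ℕ) :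
    EqOn (delayedIterate G c δ (j + 1) a) (delayedIterate G c δ j a) (Icc 0 (j * δ)) := by
  induction j with
  | zero =>
    intro y hy
    obtain rfl : y = 0 := le_antisymm (by simpa using hy.2) hy.1
    simp [delayedIterate]
  | succ j ih =>
    have hsource : EqOn (fun t => G t (delayedIterate G c δ (j + 1) a (max (t - δ) 0)))
        (fun t => G t (delayedIterate G c δ j a (max (t - δ) 0))) (Icc 0 ((j + 1 : ℕ) * δ)) := by
      intro t ht
      have hdelay : max (t - δ) 0 ∈ Icc 0 (j * δ) := by
        refine ⟨le_max_right _ _, max_le ?_ (by positivity)⟩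
        have := ht.2
        push_cast at this
        linarith
      simp only [ih hdelay]
    intro y hy
    exact congrArg _ (eqOn_triplePrimitive hsource hy)

lemma exists_eqOn_bvpSolution_delayed (hG : Continuous (Function.uncurry G))
    (hM : ∀ t v, |G t v| ≤ M) (c : ℝ) (N : ℕ) : ∃ v : ℝ → ℝ, Continuous v ∧
      EqOn v (bvpSolution c fun t => G t (v (max (t - 1 / (N + 1)) 0))) (Icc 0 1) := by
  set δ : ℝ := 1 / (N + 1)
  have hδN : ((N + 1 : ℕ) : ℝ) * δ = 1 := by push_cast; exact mul_one_div_cancel (by positivity)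
  set v := delayedIterate G c δ (N + 1)
  have hv : Continuous (Function.uncurry v) := continuous_uncurry_delayedIterate hG c δ _
  have hfix : ∀ a, ∀ y ∈ Icc (0 : ℝ) 1, v a y = c - a * y ^ 2 +
      triplePrimitive (fun t => G t (v a (max (t - δ) 0))) y := fun a y hy =>
    (eqOn_delayedIterate_succ G c a (by positivity) (N + 1) (hδN.symm ▸ hy)).symm
  have hone : (1 : ℝ) ∈ Icc (0 : ℝ) 1 := right_mem_Icc.2 zero_le_one
  have hbound : ∀ a, |triplePrimitive (fun t => G t (v a (max (t - δ) 0))) 1| ≤ M := fun a =>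
    abs_triplePrimitive_le (fun t _ => hM t _) 1 hone
  have hM₀ : 0 ≤ M := (abs_nonneg _).trans (hbound 0)
  have hcont : Continuous fun a => v a 1 := hv.comp (continuous_id.prodMk continuous_const)
  obtain ⟨a, -, ha⟩ : (0 : ℝ) ∈ (fun a => v a 1) '' Icc (c - M) (c + M) := by
    refine intermediate_value_Icc' (by linarith) hcont.continuousOn ⟨?_, ?_⟩
    · rw [hfix _ 1 hone]
      linarith [(abs_le.1 (hbound (c + M))).2]
    · rw [hfix _ 1 hone]
      linarith [(abs_le.1 (hbound (c - M))).1]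
  refine ⟨v a, hv.comp (continuous_const.prodMk continuous_id), fun y hy => ?_⟩
  have ha' : a = c + triplePrimitive (fun t => G t (v a (max (t - δ) 0))) 1 := by
    have := hfix a 1 hone
    linarith
  rw [bvpSolution, ← ha', hfix a y hy]

lemma tendsto_max_sub_zero {δ : ℕ → ℝ} (hδ : ∀ k, 0 ≤ δ k) (hlim : Tendsto δ atTop (𝓝 0)) {t : ℝ}
    (ht : t ∈ Icc (0 : ℝ) 1) : Tendsto (fun k => max (t - δ k) 0) atTop (𝓝[Icc 0 1] t) := by
  refine tendsto_nhdsWithin_iff.2 ⟨?_, Eventually.of_forall fun k =>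
    ⟨le_max_right _ _, max_le (by linarith [hδ k, ht.2]) zero_le_one⟩⟩
  simpa [ht.1] using (hlim.const_sub t).max (tendsto_const_nhds (x := 0))

lemma exists_eqOn_bvpSolution (hG : Continuous (Function.uncurry G))
    (hM : ∀ t v, |G t v| ≤ M) (c : ℝ) : ∃ v : ℝ → ℝ, Continuous v ∧
      EqOn v (bvpSolution c fun t => G t (v t)) (Icc 0 1) := by
  choose v hv hsol using exists_eqOn_bvpSolution_delayed hG hM c
  have hsource : ∀ N : ℕ, Continuous fun t => G t (v N (max (t - 1 / (N + 1)) 0)) := fun N =>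
    hG.comp (continuous_id.prodMk ((hv N).comp (by fun_prop)))
  have hlip : ∀ N, LipschitzOnWith (2 * |c| + 3 * M).toNNReal (v N) (Icc 0 1) :=
    fun N x hx y hy => by
      rw [hsol N hx, hsol N hy]
      exact lipschitzOnWith_bvpSolution (hsource N) (fun t _ => hM t _)
        (Real.le_coe_toNNReal _) hx hy
  have hbound : ∀ N, ∀ y ∈ Icc (0 : ℝ) 1, |v N y| ≤ |c| + 2 * M := fun N y hy => by
    rw [hsol N hy]
    exact abs_bvpSolution_le (fun t _ => hM t _) y hy
  obtain ⟨w, hw, ψ, hψ, hlim⟩ := exists_subseq_tendstoUniformlyOn zero_le_one hlip hbound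
  have hδ : Tendsto (fun k => (1 : ℝ) / (ψ k + 1)) atTop (𝓝 0) :=
    tendsto_one_div_add_atTop_nhds_zero_nat.comp hψ.tendsto_atTop
  have hsource_lim : ∀ t ∈ Icc (0 : ℝ) 1,
      Tendsto (fun k => G t (v (ψ k) (max (t - 1 / (ψ k + 1)) 0))) atTop (𝓝 (G t (w t))) :=
    fun t ht => ((hG.comp (continuous_const.prodMk continuous_id)).tendsto (w t)).comp
      (hlim.tendsto_comp hw.continuousWithinAt
        (tendsto_max_sub_zero (fun k => by positivity) hδ ht))
  have hT := tendsto_triplePrimitive (fun k => hsource (ψ k)) (fun k t _ => hM t _) hsource_lim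
  refine ⟨w, hw, fun y hy => tendsto_nhds_unique (hlim.tendsto_at hy) ?_⟩
  have hT₁ := hT 1 (right_mem_Icc.2 zero_le_one)
  exact ((((hT₁.const_add c).mul_const (y ^ 2)).const_sub c).add (hT y hy)).congr
    fun k => (hsol (ψ k) hy).symm

end Tonelli

/-! ### Existence of even profiles -/

lemma bvpSolution_neg_of_odd {s : ℝ → ℝ} (hs : ∀ t, s (-t) = -s t) (c y : ℝ) :
    bvpSolution c s (-y) = bvpSolution c s y := by
  rw [bvpSolution, bvpSolution, triplePrimitive,
    primitive_neg_of_odd (primitive_neg_of_even (primitive_neg_of_odd hs)), neg_sq]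

lemma bvpSolution_zero (c : ℝ) (s : ℝ → ℝ) : bvpSolution c s 0 = c := by simp [bvpSolution]

lemma bvpSolution_one (c : ℝ) (s : ℝ → ℝ) : bvpSolution c s 1 = 0 := by simp [bvpSolution]

lemma eqOn_bvpSolution {c : ℝ} {s s' : ℝ → ℝ} (h : EqOn s s' (Icc 0 1)) :
    EqOn (bvpSolution c s) (bvpSolution c s') (Icc 0 1) := fun y hy => by
  rw [bvpSolution, bvpSolution, eqOn_triplePrimitive h hy,
    eqOn_triplePrimitive h (right_mem_Icc.2 zero_le_one)]

lemma energy_bvpSolution_zero {s : ℝ → ℝ} (hs : Continuous s) (c : ℝ) :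
    energy (bvpSolution c s) 0 = 2 * c * (c + triplePrimitive s 1) := by
  rw [energy, deriv_deriv_bvpSolution hs, deriv_bvpSolution hs, bvpSolution_zero]
  simp only [primitive_self]
  ring

/-- Since `p < 1`, the right-hand side grows sublinearly, so that truncating it at a large height
leaves the solution unchanged. -/
lemma exists_eqOn_bvpSolution_signedPow {p β : ℝ} (hp₀ : 0 < p) (hp₁ : p < 1) (hβ : 0 ≤ β) :
    ∃ X > 0, ∀ c, |c| ≤ 1 → ∃ v : ℝ → ℝ, Continuous v ∧ (∀ y ∈ Icc (0 : ℝ) 1, |v y| ≤ X) ∧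
      EqOn v (bvpSolution c fun t => β * t * signedPow p (v t)) (Icc 0 1) := by
  obtain ⟨X, hX, hXp⟩ : ∃ X : ℝ, 1 ≤ X ∧ 1 + 2 * (β * X ^ p) ≤ X := by
    have hpos : 0 < 1 + 2 * β := by positivity
    set X := (1 + 2 * β) ^ (1 - p)⁻¹
    have hX : 1 ≤ X := Real.one_le_rpow (by linarith) (inv_nonneg.2 (by linarith))
    have hXX : X ^ p * (1 + 2 * β) = X := by
      rw [← Real.rpow_inv_rpow hpos.le (by linarith : 1 - p ≠ 0), ← Real.rpow_add (by linarith),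
        add_sub_cancel, Real.rpow_one]
    have := Real.one_le_rpow hX hp₀.le
    exact ⟨X, hX, by linarith⟩
  refine ⟨X, by linarith, fun c hc => ?_⟩
  set G : ℝ → ℝ → ℝ := fun t u => β * max 0 (min t 1) * signedPow p (max (-X) (min u X))
  have hG : Continuous (Function.uncurry G) := by
    have := continuous_signedPow hp₀
    fun_prop
  have hM : ∀ t u, |G t u| ≤ β * X ^ p := fun t u => by
    have hφ : |signedPow p (max (-X) (min u X))| ≤ X ^ p := abs_signedPow_le hp₀
      (abs_le.2 ⟨le_max_left _ _, max_le (by linarith) (min_le_right _ _)⟩)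
    have : 0 ≤ max 0 (min t 1) := le_max_left _ _
    have ht₁ : max 0 (min t 1) ≤ 1 := max_le zero_le_one (min_le_right _ _)
    calc |G t u| = β * max 0 (min t 1) * |signedPow p (max (-X) (min u X))| := by
          rw [abs_mul, abs_of_nonneg (by positivity)]
      _ ≤ β * 1 * X ^ p := by gcongr
      _ = β * X ^ p := by rw [mul_one]
  obtain ⟨v, hv, hsol⟩ := exists_eqOn_bvpSolution hG hM c
  have hvX : ∀ y ∈ Icc (0 : ℝ) 1, |v y| ≤ X := fun y hy => by
    rw [hsol hy]
    linarith [abs_bvpSolution_le (c := c) (fun t _ => hM t (v t)) y hy]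
  refine ⟨v, hv, hvX, fun y hy => (hsol hy).trans (eqOn_bvpSolution (fun t ht => ?_) hy)⟩
  obtain ⟨hlow, hupp⟩ := abs_le.1 (hvX t ht)
  simp only [G, min_eq_left hupp, max_eq_right hlow, min_eq_left ht.2, max_eq_right ht.1]

lemma exists_even_eqOn_bvpSolution {p β : ℝ} (hp₀ : 0 < p) (hp₁ : p < 1) (hβ : 0 ≤ β) :
    ∃ X > 0, ∀ c, |c| ≤ 1 → ∃ g : ℝ → ℝ, Continuous g ∧ (∀ y, g (-y) = g y) ∧
      (∀ y, 1 ≤ y → g y = 0) ∧ (∀ y, |g y| ≤ X) ∧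
      EqOn g (bvpSolution c fun t => β * t * signedPow p (g t)) (Icc 0 1) := by
  obtain ⟨X, hX₀, hX⟩ := exists_eqOn_bvpSolution_signedPow hp₀ hp₁ hβ
  refine ⟨X, hX₀, fun c hc => ?_⟩
  obtain ⟨v, hv, hvX, hsol⟩ := hX c hc
  have hclamp : EqOn (fun y => v (min |y| 1)) v (Icc 0 1) := fun y hy => by
    simp only [abs_of_nonneg hy.1, min_eq_left hy.2]
  refine ⟨fun y => v (min |y| 1), hv.comp (by fun_prop), fun y => by simp only [abs_neg],
    fun y hy => ?_,
    fun y => hvX _ ⟨by positivity, min_le_right _ _⟩, fun y hy => ?_⟩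
  · simp only [min_eq_right (hy.trans (le_abs_self y)), hsol (right_mem_Icc.2 zero_le_one),
      bvpSolution_one]
  · rw [hclamp hy, hsol hy]
    refine eqOn_bvpSolution (fun t ht => ?_) hy
    rw [← hclamp ht]

lemma eqOn_zero_Ioi_of_deriv {f : ℝ → ℝ} {R b : ℝ} (hRb : R < b) (hf : Differentiable ℝ f)
    (hderiv : EqOn (deriv f) 0 (Ioi R)) (hzero : EqOn f 0 (Ioo R b)) : EqOn f 0 (Ioi R) := by
  intro y hy
  obtain ⟨z, hz⟩ := nonempty_Ioo.2 hRb
  rw [isOpen_Ioi.is_const_of_deriv_eq_zero isPreconnected_Ioi hf.differentiableOn hderiv hy hz.1]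
  exact hzero hz

lemma eqOn_zero_Ioi_of_deriv_three {F : ℝ → ℝ} {R b : ℝ} (hRb : R < b) (hF : ContDiff ℝ 3 F)
    (hderiv : EqOn (deriv (deriv (deriv F))) 0 (Ioi R)) (hzero : EqOn F 0 (Ioo R b)) :
    EqOn F 0 (Ioi R) := by
  have hzero_deriv : ∀ {f : ℝ → ℝ}, EqOn f 0 (Ioo R b) → EqOn (deriv f) 0 (Ioo R b) :=
    fun hf y hy => (hf.deriv isOpen_Ioo hy).trans (deriv_const y 0)
  exact eqOn_zero_Ioi_of_deriv hRb (fun y => (hasDerivAt_of_contDiff_three hF y).differentiableAt)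
    (eqOn_zero_Ioi_of_deriv hRb
      (fun y => (hasDerivAt_deriv_of_contDiff_three hF y).differentiableAt)
      (eqOn_zero_Ioi_of_deriv hRb
        (fun y => (hasDerivAt_deriv_deriv_of_contDiff_three hF y).differentiableAt) hderiv
        (hzero_deriv (hzero_deriv hzero)))
      (hzero_deriv hzero)) hzero

lemma isProfile_bvpSolution {p β c R : ℝ} {g : ℝ → ℝ} (hp : 0 < p) (hg : Continuous g)
    (heven : ∀ y, g (-y) = g y) (hone : ∀ y, 1 ≤ y → g y = 0)
    (hsol : EqOn g (bvpSolution c fun t => β * t * signedPow p (g t)) (Icc 0 1))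
    (hR : R ∈ Ioo (0 : ℝ) 1)
    (hzero : EqOn (bvpSolution c fun t => β * t * signedPow p (g t)) 0 (Ioo R 1)) :
    IsProfile p β (bvpSolution c fun t => β * t * signedPow p (g t)) := by
  set s : ℝ → ℝ := fun t => β * t * signedPow p (g t)
  have hs : Continuous s :=
    (continuous_const.mul continuous_id).mul ((continuous_signedPow hp).comp hg)
  have hF_even : ∀ y, bvpSolution c s (-y) = bvpSolution c s y :=
    bvpSolution_neg_of_odd (fun t => by simp only [s, heven]; ring) c
  have hg_zero : EqOn g 0 (Ioi R) := fun y hy => by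
    rcases lt_or_ge y 1 with hy₁ | hy₁
    · rw [hsol ⟨hR.1.le.trans (le_of_lt hy), hy₁.le⟩, hzero ⟨hy, hy₁⟩]
    · exact hone y hy₁
  have hF_zero : EqOn (bvpSolution c s) 0 (Ioi R) :=
    eqOn_zero_Ioi_of_deriv_three hR.2 (contDiff_bvpSolution hs c) (fun y hy => by
      simp only [deriv_deriv_deriv_bvpSolution hs, s, hg_zero hy, Pi.zero_apply, signedPow_zero,
        mul_zero]) hzero
  have hFg_nonneg : ∀ y, 0 ≤ y → bvpSolution c s y = g y := fun y hy => by
    rcases le_or_gt y R with hyR | hyR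
    · exact (hsol ⟨hy, hyR.trans hR.2.le⟩).symm
    · rw [hF_zero hyR, hg_zero hyR]
  have hFg : bvpSolution c s = g := funext fun y => by
    rcases le_total 0 y with hy | hy
    · exact hFg_nonneg y hy
    · rw [← hF_even, ← heven, hFg_nonneg _ (neg_nonneg.2 hy)]
  refine ⟨⟨contDiff_bvpSolution hs c, fun y _ => ?_⟩,
    HasCompactSupport.intro (isCompact_Icc (a := -R) (b := R)) fun y hy => ?_⟩
  · rw [deriv_deriv_deriv_bvpSolution hs, hFg]
  · rcases not_and_or.1 hy with hy | hy
    · rw [← hF_even, hF_zero (mem_Ioi.2 (by linarith)), Pi.zero_apply]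
    · rw [hF_zero (not_le.1 hy), Pi.zero_apply]

lemma exists_isProfile_apply_zero_ne_zero {p β : ℝ} (hp₀ : 0 < p) (hp₁ : p < 1) (hβ : 0 < β) :
    ∃ F, IsProfile p β F ∧ F 0 ≠ 0 := by
  obtain ⟨η, hη, hextinct⟩ := IsSolutionOn.exists_extinction hp₀ hp₁ hβ
  obtain ⟨X, hX₀, hX⟩ := exists_even_eqOn_bvpSolution hp₀ hp₁ hβ.le
  set M := β * X ^ p
  obtain ⟨c, hc₀, hc₁, hcη⟩ : ∃ c > 0, c ≤ 1 ∧ 2 * c * (1 + M) ≤ η := by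
    have hM₀ : 0 < 2 * (1 + M) := by positivity
    refine ⟨min 1 (η / (2 * (1 + M))), by positivity, min_le_left _ _, ?_⟩
    calc 2 * min 1 (η / (2 * (1 + M))) * (1 + M)
        = min 1 (η / (2 * (1 + M))) * (2 * (1 + M)) := by ring
      _ ≤ η := (le_div_iff₀ hM₀).1 (min_le_right _ _)
  obtain ⟨g, hg, heven, hone, hgX, hsol⟩ := hX c (by rwa [abs_of_pos hc₀])
  set s : ℝ → ℝ := fun t => β * t * signedPow p (g t)
  have hs : Continuous s :=
    (continuous_const.mul continuous_id).mul ((continuous_signedPow hp₀).comp hg)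
  have hM : ∀ t ∈ Icc (0 : ℝ) 1, |s t| ≤ M := fun t ht => by
    rw [abs_mul, abs_of_nonneg (mul_nonneg hβ.le ht.1)]
    calc β * t * |signedPow p (g t)| ≤ β * 1 * X ^ p := by
          gcongr
          exacts [ht.2, abs_signedPow_le hp₀ (hgX t)]
      _ = M := by rw [mul_one]
  have henergy : energy (bvpSolution c s) 0 ≤ η := by
    rw [energy_bvpSolution_zero hs]
    refine le_trans ?_ hcη
    gcongr
    exact (le_abs_self _).trans (abs_triplePrimitive_le hM 1 (right_mem_Icc.2 zero_le_one))
  have hode : IsSolutionOn p β (bvpSolution c s) (Icc 0 1) :=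
    ⟨contDiff_bvpSolution hs c, fun y hy => by rw [deriv_deriv_deriv_bvpSolution hs, ← hsol hy]⟩
  obtain ⟨R, hR, hzero⟩ := hextinct _ hode (bvpSolution_one c s) henergy
  refine ⟨bvpSolution c s, isProfile_bvpSolution hp₀ hg heven hone hsol hR hzero, ?_⟩
  rw [bvpSolution_zero]
  exact hc₀.ne'

/-! ### Profiles of prescribed mass -/

/-- The scaling symmetry of the profile equation. The frequency `k = |c| ^ ((p - 1) / 4)` is the
positive solution of `c * k ^ 4 = signedPow p c`. -/
noncomputable def rescale (p c : ℝ) (F : ℝ → ℝ) (y : ℝ) : ℝ := c * F (|c| ^ ((p - 1) / 4) * y)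

lemma rescale_one (p : ℝ) (F : ℝ → ℝ) : rescale p 1 F = F := funext fun y => by simp [rescale]

lemma isProfile_rescale {p β c : ℝ} {F : ℝ → ℝ} (h : IsProfile p β F) (hc : c ≠ 0) :
    IsProfile p β (rescale p c F) := by
  refine h.const_mul_comp_mul_left (Real.rpow_pos_of_pos (abs_pos.2 hc) _).ne' ?_
  rw [← Real.rpow_mul_natCast (abs_nonneg c), Nat.cast_ofNat, div_mul_cancel₀ _ four_ne_zero,
    mul_comm, signedPow]

lemma integral_signedPow_rescale (p q : ℝ) {c : ℝ} (hc : c ≠ 0) (F : ℝ → ℝ) :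
    ∫ y, signedPow q (rescale p c F y) =
      signedPow (q + (1 - p) / 4) c * ∫ y, signedPow q (F y) := by
  have hc' : 0 < |c| := abs_pos.2 hc
  simp only [rescale, signedPow_mul]
  rw [integral_const_mul,
    Measure.integral_comp_mul_left (fun y => signedPow q (F y)), smul_eq_mul, ← mul_assoc,
    ← Real.rpow_neg hc'.le, abs_of_pos (Real.rpow_pos_of_pos hc' _), signedPow, signedPow,
    mul_right_comm (|c| ^ (q - 1)), ← Real.rpow_add hc']
  ring_nf

lemma integral_rescale (p : ℝ) {c : ℝ} (hc : c ≠ 0) (F : ℝ → ℝ) :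
    ∫ y, rescale p c F y = signedPow (1 + (1 - p) / 4) c * ∫ y, F y := by
  simpa only [signedPow_one_left] using integral_signedPow_rescale p 1 hc F

lemma exists_signedPow_mul_eq {q a b : ℝ} (hq : q ≠ 0) (ha : a ≠ 0) (hb : b ≠ 0) :
    ∃ c, c ≠ 0 ∧ signedPow q c * a = b := by
  have hc := signedPow_inv_signedPow hq (b / a)
  refine ⟨signedPow q⁻¹ (b / a), fun h₀ => ?_, by rw [hc, div_mul_cancel₀ b ha]⟩
  rw [h₀, signedPow_zero] at hc
  exact div_ne_zero hb ha hc.symm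

section Mass

variable {p β : ℝ} {F G : ℝ → ℝ}

lemma IsProfile.integral_signedPow_ne_zero (hp : 0 < p) (hβ : 0 < β) (hF : IsProfile p β F)
    (hne : F ≠ 0) : ∫ y, signedPow p (F y) ≠ 0 := fun hint =>
  hne (hF.eq_of_integral_signedPow_eq hp hβ (isProfile_zero p β) (by simpa using hint))

theorem IsProfile.eq_of_integral_eq (hp₀ : 0 < p) (hp₁ : p < 1) (hβ : 0 < β)
    (hF : IsProfile p β F) (hG : IsProfile p β G) (hint : ∫ y, F y = ∫ y, G y) : F = G := by
  rcases eq_or_ne (∫ y, F y) 0 with hmass | hmass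
  · rw [hF.eq_zero_of_integral_eq_zero hp₀ hp₁ hβ hmass,
      hG.eq_zero_of_integral_eq_zero hp₀ hp₁ hβ (hint ▸ hmass)]
  have hF₀ : F ≠ 0 := fun h => hmass (by simp [h])
  have hG₀ : G ≠ 0 := fun h => hmass (by simp [hint, h])
  obtain ⟨c, hc₀, hc⟩ := exists_signedPow_mul_eq (by linarith : p + (1 - p) / 4 ≠ 0)
    (hF.integral_signedPow_ne_zero hp₀ hβ hF₀) (hG.integral_signedPow_ne_zero hp₀ hβ hG₀)
  have hGF : rescale p c F = G := (isProfile_rescale hF hc₀).eq_of_integral_signedPow_eq hp₀ hβ hG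
    ((integral_signedPow_rescale p p hc₀ F).trans hc)
  have hc₁ : signedPow (1 + (1 - p) / 4) c = signedPow (1 + (1 - p) / 4) 1 := by
    rw [signedPow_one_right]
    refine mul_right_cancel₀ hmass ?_
    rw [← integral_rescale p hc₀, hGF, one_mul, hint]
  rw [← hGF, (signedPow_strictMono (by linarith)).injective hc₁, rescale_one]

theorem exists_isProfile_integral_eq (hp₀ : 0 < p) (hp₁ : p < 1) (hβ : 0 < β) (m : ℝ) :
    ∃ F, IsProfile p β F ∧ ∫ y, F y = m := by
  rcases eq_or_ne m 0 with rfl | hm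
  · exact ⟨_, isProfile_zero p β, integral_zero ℝ ℝ⟩
  obtain ⟨F, hF, hF₀⟩ := exists_isProfile_apply_zero_ne_zero hp₀ hp₁ hβ
  have hmass : ∫ y, F y ≠ 0 := fun hint =>
    hF₀ (congrFun (hF.eq_zero_of_integral_eq_zero hp₀ hp₁ hβ hint) 0)
  obtain ⟨c, hc₀, hc⟩ := exists_signedPow_mul_eq (by linarith : 1 + (1 - p) / 4 ≠ 0) hmass hm
  exact ⟨rescale p c F, isProfile_rescale hF hc₀, (integral_rescale p hc₀ F).trans hc⟩

end Mass

/-! ### Support and sign changes -/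

lemma nonpos_of_hasDerivAt_nonneg {f f' : ℝ → ℝ} {R : ℝ} (hderiv : ∀ y, HasDerivAt f (f' y) y)
    (hf' : ∀ y, 0 ≤ y → 0 ≤ f' y) (hzero : ∀ y, R ≤ y → f y = 0) {y : ℝ} (hy : 0 ≤ y) :
    f y ≤ 0 := by
  have hmono : MonotoneOn f (Ici 0) := monotoneOn_of_hasDerivWithinAt_nonneg (convex_Ici 0)
    (fun z _ => (hderiv z).continuousAt.continuousWithinAt)
    (fun z _ => (hderiv z).hasDerivWithinAt) fun z hz => hf' z (interior_subset hz)
  have hle := le_max_left y R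
  exact (hmono hy (hy.trans hle) hle).trans_eq (hzero _ (le_max_right y R))

namespace IsProfile

variable {p β : ℝ} {F : ℝ → ℝ}

lemma neg (h : IsProfile p β F) : IsProfile p β (-F) := by
  simpa [Pi.neg_def] using
    h.const_mul_comp_mul_left (a := -1) (k := 1) (by norm_num) (by norm_num)

theorem exists_neg (hp : 0 < p) (hβ : 0 < β) (h : IsProfile p β F) (hne : F ≠ 0) :
    ∃ y, F y < 0 := by
  by_contra! hnonneg
  obtain ⟨R, hzero⟩ := h.exists_forall_le_abs
  have hzero' : ∀ y, R ≤ y → F =ᶠ[𝓝 y] fun _ => 0 := fun y hy => hzero y (hy.trans (le_abs_self y))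
  have hderiv₂ : ∀ y, 0 ≤ y → deriv (deriv F) y ≤ 0 := fun y =>
    nonpos_of_hasDerivAt_nonneg (fun y => h.hasDerivAt_deriv_deriv (mem_univ y))
      (fun y hy => mul_nonneg (mul_nonneg hβ.le hy) (signedPow_nonneg p (hnonneg y)))
      fun y hy => by simpa using (hzero' y hy).deriv.deriv.eq_of_nhds
  have hderiv₁ : ∀ y, 0 ≤ y → -deriv F y ≤ 0 := fun y =>
    nonpos_of_hasDerivAt_nonneg (fun y => (hasDerivAt_deriv_of_contDiff_three h.contDiff y).neg)
      (fun y hy => neg_nonneg.2 (hderiv₂ y hy))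
      fun y hy => by simpa using (hzero' y hy).deriv.eq_of_nhds
  have hnonpos : ∀ y, 0 ≤ y → F y ≤ 0 := fun y =>
    nonpos_of_hasDerivAt_nonneg (hasDerivAt_of_contDiff_three h.contDiff)
      (fun y hy => neg_nonpos.1 (hderiv₁ y hy)) fun y hy => (hzero' y hy).eq_of_nhds
  refine hne (funext fun y => le_antisymm ?_ (hnonneg y))
  rcases le_total 0 y with hy | hy
  · exact hnonpos y hy
  · rw [← h.apply_neg hp hβ]
    exact hnonpos (-y) (neg_nonneg.2 hy)

theorem exists_pos (hp : 0 < p) (hβ : 0 < β) (h : IsProfile p β F) (hne : F ≠ 0) :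
    ∃ y, 0 < F y := by
  simpa using h.neg.exists_neg hp hβ (neg_ne_zero.2 hne)

lemma eqOn_zero_Ioi (hp : 0 < p) (hβ : 0 < β) (h : IsProfile p β F) {y : ℝ} (hy : 0 ≤ y)
    (hzero : F =ᶠ[𝓝 y] fun _ => 0) : EqOn F 0 (Ioi y) := by
  intro z hz
  obtain ⟨R, hfar⟩ := h.exists_forall_le_abs
  set L := max R (z + 1)
  have hzL : z < L := (lt_add_one z).trans_le (le_max_right _ _)
  have hL : F =ᶠ[𝓝 L] fun _ => 0 := hfar L ((le_max_left _ _).trans (le_abs_self L))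
  refine (h.toIsSolutionOn.mono (subset_univ _)).eq_zero_of_energy_le hp hβ hy
    (b := L) ?_ z ⟨hz, hzL⟩
  rw [energy_eq_zero hzero, energy_eq_zero hL]

lemma neg_mem_tsupport (hp : 0 < p) (hβ : 0 < β) (h : IsProfile p β F) {y : ℝ} :
    -y ∈ tsupport F ↔ y ∈ tsupport F := by
  have hpre := tsupport_comp_eq_preimage F (Homeomorph.neg ℝ)
  rw [show F ∘ Homeomorph.neg ℝ = F from funext (h.apply_neg hp hβ)] at hpre
  nth_rw 2 [hpre]
  rfl

theorem exists_tsupport_eq_Icc (hp : 0 < p) (hβ : 0 < β) (h : IsProfile p β F) (hne : F ≠ 0) :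
    ∃ y₀, 0 < y₀ ∧ tsupport F = Icc (-y₀) y₀ := by
  have hsymm : ∀ {y}, -y ∈ tsupport F ↔ y ∈ tsupport F := h.neg_mem_tsupport hp hβ
  obtain ⟨x, hx⟩ := Function.ne_iff.1 hne
  obtain ⟨y₀, hy₀, hmax⟩ := h.hasCompactSupport.isCompact.exists_isGreatest
    ⟨x, subset_tsupport F hx⟩
  have hsub : tsupport F ⊆ Icc (-y₀) y₀ := fun y hy =>
    ⟨neg_le.1 (hmax (hsymm.2 hy)), hmax hy⟩
  have hnonneg : ∀ y, 0 ≤ y → y ≤ y₀ → y ∈ tsupport F := by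
    intro y hy hyy₀
    by_contra hnot
    have hzero := h.eqOn_zero_Ioi hp hβ hy (notMem_tsupport_iff_eventuallyEq.1 hnot)
    have hIic : tsupport F ⊆ Iic y :=
      closure_minimal (fun z hz => mem_Iic.2 (not_lt.1 fun hyz => hz (hzero hyz))) isClosed_Iic
    exact hnot (le_antisymm hyy₀ (hIic hy₀) ▸ hy₀)
  have hpos : 0 < y₀ := by
    by_contra! hle
    refine hne (h.contDiff.continuous.ext_on (dense_compl_singleton 0) continuous_const
      fun z hz => by_contra fun hFz => hz ?_)
    have := hsub (subset_tsupport F hFz)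
    exact le_antisymm (this.2.trans hle) (by linarith [this.1])
  refine ⟨y₀, hpos, hsub.antisymm fun y hy => ?_⟩
  rcases le_total 0 y with hy₀ | hy₀
  · exact hnonneg y hy₀ hy.2
  · exact hsymm.1 (hnonneg (-y) (neg_nonneg.2 hy₀) (neg_le.1 hy.1))

end IsProfile

end ThinFilm

open ThinFilm in
theorem CP_similarity_profile_exists_unique_general
    {n β : ℝ} (hn : n ∈ Set.Ioo (0 : ℝ) 1) (hβ : 0 < β) :
    ∃ F : ℝ → ℝ,
      (ContDiff ℝ 3 F ∧ HasCompactSupport F ∧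
        (∀ y : ℝ, |F y| ^ n * deriv (deriv (deriv F)) y = β * y * F y) ∧
        (∫ y : ℝ, F y) = 1) ∧
      (∀ G : ℝ → ℝ,
        (ContDiff ℝ 3 G ∧ HasCompactSupport G ∧
          (∀ y : ℝ, |G y| ^ n * deriv (deriv (deriv G)) y = β * y * G y) ∧
          (∫ y : ℝ, G y) = 1) → G = F) ∧
      (∀ y : ℝ, F (-y) = F y) ∧
      (∃ y₀ : ℝ, 0 < y₀ ∧ tsupport F = Set.Icc (-y₀) y₀) ∧
      (∃ y₁ : ℝ, 0 < F y₁) ∧ (∃ y₂ : ℝ, F y₂ < 0) := by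
  have hp₀ : 0 < 1 - n := sub_pos.2 hn.2
  have hp₁ : 1 - n < 1 := sub_lt_self 1 hn.1
  obtain ⟨F, hF, hmass⟩ := exists_isProfile_integral_eq hp₀ hp₁ hβ 1
  have hne : F ≠ 0 := by
    rintro rfl
    simp at hmass
  obtain ⟨hcont, hsupp, hode⟩ := (isProfile_one_sub_iff hn.2).1 hF
  refine ⟨F, ⟨hcont, hsupp, hode, hmass⟩, ?_, hF.apply_neg hp₀ hβ,
    hF.exists_tsupport_eq_Icc hp₀ hβ hne, hF.exists_pos hp₀ hβ hne, hF.exists_neg hp₀ hβ hne⟩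
  rintro G ⟨hG_cont, hG_supp, hG_ode, hG_mass⟩
  exact ((isProfile_one_sub_iff hn.2).2 ⟨hG_cont, hG_supp, hG_ode⟩).eq_of_integral_eq hp₀ hp₁ hβ hF
    (hG_mass.trans hmass.symm)

/-- Existence and uniqueness of the sign-changing source-type similarity profile of
the Cauchy problem for the thin film equation (`N = 1`, `n ∈ (0,1)`,
`β = 1/(4+n)`): there is exactly one compactly supported `C³` solution of
`|F|^n F''' = β y F` of unit mass; it is even, its support is a bounded symmetric
interval, and it changes sign. -/
theorem CP_similarity_profile_exists_unique
    (n : ℝ) (hn : n ∈ Set.Ioo (0 : ℝ) 1) (β : ℝ) (hβ : β = 1 / (4 + n)) :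
    ∃ F : ℝ → ℝ,
      (ContDiff ℝ 3 F ∧ HasCompactSupport F ∧
        (∀ y : ℝ, |F y| ^ n * deriv (deriv (deriv F)) y = β * y * F y) ∧
        (∫ y : ℝ, F y) = 1) ∧
      (∀ G : ℝ → ℝ,
        (ContDiff ℝ 3 G ∧ HasCompactSupport G ∧
          (∀ y : ℝ, |G y| ^ n * deriv (deriv (deriv G)) y = β * y * G y) ∧
          (∫ y : ℝ, G y) = 1) → G = F) ∧
      (∀ y : ℝ, F (-y) = F y) ∧
      (∃ y₀ : ℝ, 0 < y₀ ∧ tsupport F = Set.Icc (-y₀) y₀) ∧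
      (∃ y₁ : ℝ, 0 < F y₁) ∧ (∃ y₂ : ℝ, F y₂ < 0) :=
  CP_similarity_profile_exists_unique_general hn (by rw [hβ]; have := hn.1; positivity)
end

section
/- Let N ≥ 1, c₀ = 1/(8(N+2)(N+4)), p = 2 + 4/N, and on the unit ball B₁ ⊂ ℝ^N set F(ζ) = c₀(1 − ‖ζ‖²)², ψ₀(ζ) = b₀(‖ζ‖² − 1) with b₀ = −√((N+2)/(2ω_N)) (ω_N the volume of B₁), and ρ(ζ) = (1 − ‖ζ‖²)^{−1}. Then γ₁ := −∫_{B₁} ((1/4) ζ·∇F(ζ) − F(ζ)) ψ₀(ζ) ρ(ζ) dζ > 0 and γ₂ := ∫_{B₁} F(ζ)^p ψ₀(ζ) ρ(ζ) dζ > 0. -/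
open MeasureTheory
open scoped RealInnerProductSpace

/-!
On `B₁` the product `ψ₀ ρ` is the positive constant `-b₀`, so the `L²_ρ`-projection onto `ψ₀` is a
positive multiple of the unweighted mean. By the chain rule
`¼ ζ·∇F - F = -c₀‖ζ‖²(1 - ‖ζ‖²) - c₀(1 - ‖ζ‖²)² = -c₀(1 - ‖ζ‖²)`, so `γ₁` and `γ₂` are positive
multiples of the integrals of `c₀(1 - ‖ζ‖²)` and `F ^ p`, both positive on `B₁`.
-/

open Metric (ball closedBall)

lemma setIntegral_ball_pos {X : Type*} [MetricSpace X] [ProperSpace X] [MeasurableSpace X]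
    [OpensMeasurableSpace X] {μ : Measure X} [IsFiniteMeasureOnCompacts μ] [μ.IsOpenPosMeasure]
    {f : X → ℝ} {x : X} {r : ℝ} (hr : 0 < r) (hf : ContinuousOn f (closedBall x r))
    (hpos : ∀ y ∈ ball x r, 0 < f y) : 0 < ∫ y in ball x r, f y ∂μ := by
  have hint : IntegrableOn f (ball x r) μ :=
    (hf.integrableOn_compact (isCompact_closedBall x r)).mono_set Metric.ball_subset_closedBall
  have hnonneg : 0 ≤ᵐ[μ.restrict (ball x r)] f :=
    ae_restrict_of_forall_mem measurableSet_ball fun y hy => (hpos y hy).le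
  have hsupport : Function.support f ∩ ball x r = ball x r :=
    Set.inter_eq_right.2 fun y hy => (hpos y hy).ne'
  rw [setIntegral_pos_iff_support_of_nonneg_ae hnonneg hint, hsupport]
  exact Metric.measure_ball_pos μ x hr

lemma one_sub_norm_sq_pos_of_mem_ball {E : Type*} [SeminormedAddCommGroup E] {x : E}
    (hx : x ∈ ball (0 : E) 1) : 0 < 1 - ‖x‖ ^ 2 :=
  sub_pos.2 ((sq_lt_one_iff₀ (norm_nonneg x)).2 (mem_ball_zero_iff.1 hx))

lemma setIntegral_ball_mul_norm_sq_sub_one_mul_inv {E : Type*} [SeminormedAddCommGroup E]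
    [MeasurableSpace E] [OpensMeasurableSpace E] (μ : Measure E) (f : E → ℝ) (b : ℝ) :
    ∫ x in ball (0 : E) 1, f x * (b * (‖x‖ ^ 2 - 1)) * (1 - ‖x‖ ^ 2)⁻¹ ∂μ =
      -b * ∫ x in ball (0 : E) 1, f x ∂μ := by
  rw [← integral_const_mul]
  refine setIntegral_congr_fun measurableSet_ball fun x hx => ?_
  have hx₀ : 1 - ‖x‖ ^ 2 ≠ 0 := (one_sub_norm_sq_pos_of_mem_ball hx).ne'
  field_simp
  ring

section InnerProductSpace

variable {E : Type*} [NormedAddCommGroup E] [InnerProductSpace ℝ E]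

lemma hasGradientAt_comp_norm_sq [CompleteSpace E] {φ : ℝ → ℝ} {φ' : ℝ} {x : E}
    (hφ : HasDerivAt φ φ' (‖x‖ ^ 2)) :
    HasGradientAt (fun y => φ (‖y‖ ^ 2)) ((2 * φ') • x) x := by
  rw [hasGradientAt_iff_hasFDerivAt]
  refine (hφ.comp_hasFDerivAt x (hasStrictFDerivAt_norm_sq x).hasFDerivAt).congr_fderiv ?_
  ext y
  simp [mul_comm, mul_left_comm]

lemma quarter_inner_gradient_sub_self [CompleteSpace E] {F : E → ℝ} {c : ℝ}
    (hF : ∀ x, F x = c * (1 - ‖x‖ ^ 2) ^ 2) (x : E) :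
    (1 / 4) * ⟪x, gradient F x⟫ - F x = -(c * (1 - ‖x‖ ^ 2)) := by
  have hφ : HasDerivAt (fun s : ℝ => c * (1 - s) ^ 2) (-2 * c * (1 - ‖x‖ ^ 2)) (‖x‖ ^ 2) := by
    refine ((((hasDerivAt_id (‖x‖ ^ 2)).const_sub 1).pow 2).const_mul c).congr_deriv ?_
    simp only [id]
    ring
  have hgrad : gradient F x = (2 * (-2 * c * (1 - ‖x‖ ^ 2))) • x := by
    rw [funext hF]
    exact (hasGradientAt_comp_norm_sq hφ).gradient
  rw [hgrad, real_inner_smul_right, real_inner_self_eq_norm_sq, hF]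
  ring

theorem projection_coefficients_positive_general [ProperSpace E] [MeasurableSpace E]
    [OpensMeasurableSpace E] (μ : Measure E) [IsFiniteMeasureOnCompacts μ] [μ.IsOpenPosMeasure]
    {c₀ p b₀ : ℝ} (hc₀ : 0 < c₀) (hp : 0 ≤ p) (hb₀ : b₀ < 0) {F ψ₀ ρ : E → ℝ}
    (hF : ∀ ζ, F ζ = c₀ * (1 - ‖ζ‖ ^ 2) ^ 2) (hψ₀ : ∀ ζ, ψ₀ ζ = b₀ * (‖ζ‖ ^ 2 - 1))
    (hρ : ∀ ζ, ρ ζ = (1 - ‖ζ‖ ^ 2)⁻¹) :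
    0 < -(∫ ζ in ball (0 : E) 1, ((1 / 4) * ⟪ζ, gradient F ζ⟫ - F ζ) * ψ₀ ζ * ρ ζ ∂μ) ∧
    0 < ∫ ζ in ball (0 : E) 1, F ζ ^ p * ψ₀ ζ * ρ ζ ∂μ := by
  have hb : 0 < -b₀ := neg_pos.2 hb₀
  simp only [hψ₀, hρ, setIntegral_ball_mul_norm_sq_sub_one_mul_inv,
    quarter_inner_gradient_sub_self hF, integral_neg, mul_neg, neg_neg]
  constructor
  · exact mul_pos hb <| setIntegral_ball_pos one_pos (Continuous.continuousOn (by fun_prop))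
      fun ζ hζ => mul_pos hc₀ (one_sub_norm_sq_pos_of_mem_ball hζ)
  · have hF_cont : Continuous F := by
      rw [funext hF]
      fun_prop
    have hF_pos : ∀ ζ ∈ ball (0 : E) 1, 0 < F ζ := fun ζ hζ => by
      rw [hF]
      exact mul_pos hc₀ (pow_pos (one_sub_norm_sq_pos_of_mem_ball hζ) 2)
    exact mul_pos hb <| setIntegral_ball_pos one_pos
      (hF_cont.rpow_const fun _ => Or.inr hp).continuousOn
      fun ζ hζ => Real.rpow_pos_of_pos (hF_pos ζ hζ) p

end InnerProductSpace

/-- Positivity of the two projection coefficients `γ₁, γ₂` driving the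
centre-subspace dynamics of the thin film equation with critical absorption
(`n = 1`, `p = p₀ = 2 + 4/N`). -/
theorem projection_coefficients_positive
    (N : ℕ) (hN : 1 ≤ N) (c₀ p ωN b₀ : ℝ)
    (hc₀ : c₀ = 1 / (8 * (N + 2) * (N + 4))) (hp : p = 2 + 4 / N)
    (hω : ωN = (volume (Metric.ball (0 : EuclideanSpace ℝ (Fin N)) 1)).toReal)
    (hb₀ : b₀ = -Real.sqrt ((N + 2) / (2 * ωN)))
    (F ψ₀ ρ : EuclideanSpace ℝ (Fin N) → ℝ)
    (hF : ∀ ζ, F ζ = c₀ * (1 - ‖ζ‖ ^ 2) ^ 2)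
    (hψ₀ : ∀ ζ, ψ₀ ζ = b₀ * (‖ζ‖ ^ 2 - 1))
    (hρ : ∀ ζ, ρ ζ = (1 - ‖ζ‖ ^ 2)⁻¹) :
    0 < -(∫ ζ in Metric.ball (0 : EuclideanSpace ℝ (Fin N)) 1,
          ((1 / 4) * ⟪ζ, gradient F ζ⟫ - F ζ) * ψ₀ ζ * ρ ζ) ∧
    0 < ∫ ζ in Metric.ball (0 : EuclideanSpace ℝ (Fin N)) 1,
          F ζ ^ p * ψ₀ ζ * ρ ζ := by
  have hω_pos : 0 < ωN := by
    rw [hω]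
    exact ENNReal.toReal_pos (Metric.measure_ball_pos _ _ one_pos).ne' measure_ball_lt_top.ne
  have hc₀_pos : 0 < c₀ := by rw [hc₀]; positivity
  have hb₀_neg : b₀ < 0 := by rw [hb₀, neg_lt_zero]; positivity
  have hp_nonneg : 0 ≤ p := by rw [hp]; positivity
  exact projection_coefficients_positive_general volume hc₀_pos hp_nonneg hb₀_neg hF hψ₀ hρ
end

section
/- Let N ≥ 1. For every C⁴ function Y : ℝ^N → ℝ and every ζ ∈ ℝ^N one has div((1 − ‖·‖²)² ∇(ΔY))(ζ) = (1 − ‖ζ‖²) [ Δ((1 − ‖·‖²) ΔY)(ζ) + 2N ΔY(ζ) ]. Consequently, with F(ζ) = c₀(1 − ‖ζ‖²)² and ρ(ζ) = (1 − ‖ζ‖²)^{−1}, the linearised thin-film operator A'(F)Y = −div(F ∇ΔY) satisfies ρ·A'(F)Y = −c₀[Δ(aΔY) + 2N ΔY] with a(ζ) = 1 − ‖ζ‖², a formally self-adjoint (divergence-squared) form. -/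
/-- The Laplacian of a scalar function on `ℝ^N`. -/
noncomputable def lap {N : ℕ} (f : EuclideanSpace ℝ (Fin N) → ℝ)
    (x : EuclideanSpace ℝ (Fin N)) : ℝ :=
  ∑ i : Fin N, fderiv ℝ (fun y => fderiv ℝ f y (EuclideanSpace.single i 1)) x
    (EuclideanSpace.single i 1)

/-- The divergence of a vector field on `ℝ^N`. -/
noncomputable def diverg {N : ℕ}
    (V : EuclideanSpace ℝ (Fin N) → EuclideanSpace ℝ (Fin N))
    (x : EuclideanSpace ℝ (Fin N)) : ℝ :=
  ∑ i : Fin N, fderiv ℝ (fun y => V y i) x (EuclideanSpace.single i 1)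

/-!
Write `a = 1 - ‖·‖²` and `u = ΔY`. The product rule for `∇(au)` gives
`a² ∇u = a ∇(au) - (au) ∇a`, and Lagrange's identity `div (f ∇g - g ∇f) = f Δg - g Δf` turns the
divergence of the right-hand side into `a Δ(au) - au Δa`; finally `Δa = -2N`.
-/

open scoped Gradient RealInnerProductSpace Topology

section Gradient

variable {F : Type*} [NormedAddCommGroup F] [InnerProductSpace ℝ F] [CompleteSpace F]
  {f g : F → ℝ} {x : F}

theorem differentiableAt_gradient (hf : ContDiffAt ℝ 2 f x) : DifferentiableAt ℝ (∇ f) x :=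
  (InnerProductSpace.toDual ℝ F).symm.differentiableAt.comp x
    ((hf.fderiv_right one_add_one_eq_two.le).differentiableAt one_ne_zero)

theorem gradient_fun_mul (hf : DifferentiableAt ℝ f x) (hg : DifferentiableAt ℝ g x) :
    ∇ (fun y => f y * g y) x = f x • ∇ g x + g x • ∇ f x := by
  simp only [gradient, fderiv_fun_mul hf hg, map_add, map_smul]

theorem gradient_const_sub_norm_sq (c : ℝ) (x : F) :
    ∇ (fun y : F => c - ‖y‖ ^ 2) x = (-2 : ℝ) • x := by
  refine ext_inner_right ℝ fun v => ?_
  rw [inner_gradient_left, fderiv_const_sub, fderiv_norm_sq_apply]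
  simp [inner_smul_left]

end Gradient

section Divergence

variable {N : ℕ} {V W : EuclideanSpace ℝ (Fin N) → EuclideanSpace ℝ (Fin N)}
  {f g a u : EuclideanSpace ℝ (Fin N) → ℝ} {x : EuclideanSpace ℝ (Fin N)}

theorem gradient_apply (f : EuclideanSpace ℝ (Fin N) → ℝ) (x : EuclideanSpace ℝ (Fin N))
    (i : Fin N) : ∇ f x i = fderiv ℝ f x (EuclideanSpace.single i 1) := by
  rw [← inner_gradient_left, EuclideanSpace.inner_single_right]
  simp

theorem diverg_gradient (f : EuclideanSpace ℝ (Fin N) → ℝ) : diverg (∇ f) = lap f := by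
  funext x
  simp only [diverg, lap, gradient_apply]

theorem diverg_congr (h : V =ᶠ[𝓝 x] W) : diverg V x = diverg W x := by
  refine Finset.sum_congr rfl fun i _ => ?_
  have hi : (fun y => V y i) =ᶠ[𝓝 x] fun y => W y i := h.fun_comp fun v => v i
  rw [hi.fderiv_eq]

theorem diverg_fun_sub (hV : DifferentiableAt ℝ V x) (hW : DifferentiableAt ℝ W x) :
    diverg (fun y => V y - W y) x = diverg V x - diverg W x := by
  rw [differentiableAt_euclidean] at hV hW
  simp only [diverg, PiLp.sub_apply, fderiv_fun_sub (hV _) (hW _), sub_apply,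
    Finset.sum_sub_distrib]

theorem diverg_fun_smul (hf : DifferentiableAt ℝ f x) (hV : DifferentiableAt ℝ V x) :
    diverg (fun y => f y • V y) x = f x * diverg V x + ⟪∇ f x, V x⟫ := by
  rw [differentiableAt_euclidean] at hV
  simp only [diverg, PiLp.smul_apply, smul_eq_mul, fderiv_fun_mul hf (hV _), add_apply, smul_apply,
    Finset.sum_add_distrib, Finset.mul_sum, PiLp.inner_apply, gradient_apply, RCLike.inner_apply,
    conj_trivial]

theorem diverg_id (x : EuclideanSpace ℝ (Fin N)) : diverg (fun y => y) x = N := by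
  have hcoord (i : Fin N) : fderiv ℝ (fun y : EuclideanSpace ℝ (Fin N) => y i) x =
      EuclideanSpace.proj i :=
    (EuclideanSpace.proj (𝕜 := ℝ) i).fderiv
  simp [diverg, hcoord]

theorem contDiffAt_lap {m n : WithTop ℕ∞} (hf : ContDiffAt ℝ n f x) (hmn : m + 1 + 1 ≤ n) :
    ContDiffAt ℝ m (lap f) x :=
  ContDiffAt.sum fun _ _ =>
    (((hf.fderiv_right hmn).clm_apply contDiffAt_const).fderiv_right le_rfl).clm_apply
      contDiffAt_const

theorem lap_const_sub_norm_sq (c : ℝ) (x : EuclideanSpace ℝ (Fin N)) :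
    lap (fun y => c - ‖y‖ ^ 2) x = -(2 * N) := by
  rw [← diverg_gradient, funext (gradient_const_sub_norm_sq c),
    diverg_fun_smul (differentiableAt_const _) differentiableAt_fun_id, diverg_id,
    gradient_fun_const, inner_zero_left]
  ring

theorem diverg_smul_gradient (hf : DifferentiableAt ℝ f x) (hg : ContDiffAt ℝ 2 g x) :
    diverg (fun y => f y • ∇ g y) x = f x * lap g x + ⟪∇ f x, ∇ g x⟫ := by
  rw [diverg_fun_smul hf (differentiableAt_gradient hg), diverg_gradient]

theorem diverg_smul_gradient_sub_smul_gradient (hf : ContDiffAt ℝ 2 f x)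
    (hg : ContDiffAt ℝ 2 g x) :
    diverg (fun y => f y • ∇ g y - g y • ∇ f y) x = f x * lap g x - g x * lap f x := by
  have hf' := hf.differentiableAt two_ne_zero
  have hg' := hg.differentiableAt two_ne_zero
  rw [diverg_fun_sub (hf'.fun_smul (differentiableAt_gradient hg))
      (hg'.fun_smul (differentiableAt_gradient hf)),
    diverg_smul_gradient hf' hg, diverg_smul_gradient hg' hf, real_inner_comm]
  ring

theorem diverg_sq_smul_gradient (ha : ContDiffAt ℝ 2 a x) (hu : ContDiffAt ℝ 2 u x) :
    diverg (fun y => a y ^ 2 • ∇ u y) x =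
      a x * (lap (fun y => a y * u y) x - u x * lap a x) := by
  have hfield : (fun y => a y ^ 2 • ∇ u y) =ᶠ[𝓝 x]
      fun y => a y • ∇ (fun z => a z * u z) y - (a y * u y) • ∇ a y := by
    filter_upwards [ha.eventually (by simp), hu.eventually (by simp)] with y hay huy
    rw [gradient_fun_mul (hay.differentiableAt two_ne_zero) (huy.differentiableAt two_ne_zero)]
    module
  rw [diverg_congr hfield, diverg_smul_gradient_sub_smul_gradient ha (ha.mul hu)]
  ring

end Divergence

theorem linearised_TFE_symmetric_form_general {N : ℕ} {u : EuclideanSpace ℝ (Fin N) → ℝ}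
    {ζ : EuclideanSpace ℝ (Fin N)} (hu : ContDiffAt ℝ 2 u ζ) :
    diverg (fun z => (1 - ‖z‖ ^ 2) ^ 2 • ∇ u z) ζ =
      (1 - ‖ζ‖ ^ 2) * (lap (fun z => (1 - ‖z‖ ^ 2) * u z) ζ + 2 * N * u ζ) := by
  have ha : ContDiffAt ℝ 2 (fun z : EuclideanSpace ℝ (Fin N) => 1 - ‖z‖ ^ 2) ζ :=
    contDiffAt_const.sub (contDiff_norm_sq ℝ).contDiffAt
  rw [diverg_sq_smul_gradient ha hu, lap_const_sub_norm_sq]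
  ring

/-- The symmetric (divergence-squared) form of the linearised thin-film operator:
`div((1-‖·‖²)² ∇ΔY)(ζ) = (1-‖ζ‖²)[Δ((1-‖·‖²)ΔY)(ζ) + 2N ΔY(ζ)]` for every `C⁴`
function `Y` on `ℝ^N`. -/
theorem linearised_TFE_symmetric_form
    (N : ℕ) (hN : 1 ≤ N) (Y : EuclideanSpace ℝ (Fin N) → ℝ)
    (hY : ContDiff ℝ 4 Y) (ζ : EuclideanSpace ℝ (Fin N)) :
    diverg (fun z => ((1 - ‖z‖ ^ 2) ^ 2) • gradient (lap Y) z) ζ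
      = (1 - ‖ζ‖ ^ 2) *
        (lap (fun z => (1 - ‖z‖ ^ 2) * lap Y z) ζ + 2 * N * lap Y ζ) :=
  linearised_TFE_symmetric_form_general (contDiffAt_lap hY.contDiffAt (by norm_num))
end
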